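/- arXiv:math/0604324 — 2 statements merged into one kernel-verified Lean document; each statement's English description precedes it below -/
import Mathlib

section
/- Let 0 < a < 1. Then the limit as m → ∞ of √m · ((1+a)/(1−a))^m · L_m(a) exists and equals (1−a)/√(πa). -/
/-!
Write `r = (1 - a) / (1 + a)`, `κ = (1 + a) / 2` and parametrize `[a, 1]` by
`x = κ * |1 + r * exp (i * θ)|`, so that `cos θ` is an affine function of `x ^ 2`. Passing to odd parts,
one approximates `1` on `[a, 1]` by `x * q (x ^ 2)` with `q` of degree at most `m`; equivalently, one
approximates `1 / |1 + r * exp (i * θ)|` by cosine polynomials of degree at most `m`, in the sup norm with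
weight `w = |1 + r * exp (i * θ)|`.

The binomial series of `(1 + r * exp (i * θ)) ^ (-1/2)` times its conjugate gives the Fourier
coefficients `(-r) ^ k * bb r k` of `1 / w` (`hasSum_fourier`). Here `bb r` is antitone and, by Wallis'
product, `√k * bb r k` tends to `1 / √(π * (1 - r ^ 2))` (dominated convergence,
`tendsto_sqrt_bb`). So, with `n = m + 1`, the tail of the series is, up to `o(r ^ n / √n)`, the geometric
tail `2 * (-r) ^ n * bb r n * ∑ j, (-r) ^ j * cos ((n + j) * θ)`, and `w` times this tail is *exactly*
`2 * (-r) ^ n * bb r n * cos (n * θ - arg (1 + r * exp (i * θ)))` (`hasSum_main`, `error_estimate`).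

The phase `n * θ - arg (1 + r * exp (i * θ))` increases from `0` to `n * π` on `[0, π]`, so this leading
part equioscillates at `n + 1` points (`exists_alternation`). A polynomial of degree less than `n` with
`n + 1` sign alternations does not exist (`no_alternation`), which is the de la Vallée Poussin lower bound
(`lower_bound`); the truncated series gives the upper bound (`upper_bound`). Together
`L_m(a) = 2 * r ^ n * (bb r n + o(1 / √n))`, and the limit follows.
-/

open Filter Set

/-- The set `X(a) = [-1,-a] ∪ [a,1]`. -/
def X (a : ℝ) : Set ℝ := Icc (-1) (-a) ∪ Icc a 1

/-- The error of best uniform approximation of `sgn` on `X(a)` by real polynomials of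
degree at most `2m+1`. -/
noncomputable def Lm (m : ℕ) (a : ℝ) : ℝ :=
  sInf { r | ∃ p : Polynomial ℝ, p.natDegree ≤ 2 * m + 1 ∧
    r = sSup ((fun x => |p.eval x - Real.sign x|) '' X a) }

/-! ### The binomial coefficients of exponent `-1/2` -/

/-- The coefficients of the binomial series `(1 - z)^(-1/2) = ∑ c n * z ^ n`. -/
noncomputable def cc (n : ℕ) : ℝ := n.centralBinom / 4 ^ n

lemma cc_pos (n : ℕ) : 0 < cc n := by
  unfold cc
  have := Nat.centralBinom_pos n
  positivity

lemma cc_zero : cc 0 = 1 := by simp [cc]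

lemma cc_succ (n : ℕ) : (2 * n + 2) * cc (n + 1) = (2 * n + 1) * cc n := by
  have h : ((n : ℝ) + 1) * (n + 1).centralBinom = 2 * (2 * n + 1) * n.centralBinom := by
    exact_mod_cast Nat.succ_mul_centralBinom_succ n
  unfold cc
  rw [pow_succ]
  field_simp
  linarith

lemma cc_antitone : Antitone cc := by
  refine antitone_nat_of_succ_le fun n => ?_
  have h := cc_succ n
  have h0 := cc_pos n
  have h1 := cc_pos (n + 1)
  have hn : (0 : ℝ) ≤ n := n.cast_nonneg
  nlinarith

lemma cc_le_one (n : ℕ) : cc n ≤ 1 := cc_zero ▸ cc_antitone (Nat.zero_le n)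

/-- The convolution identity `∑ c i * c j = 1`, from the differential equation
`2 (1 - X) g' = g` satisfied by the generating function `g`. -/
lemma cc_conv (n : ℕ) : ∑ ij ∈ Finset.HasAntidiagonal.antidiagonal n, cc ij.1 * cc ij.2 = 1 := by
  set g : PowerSeries ℝ := PowerSeries.mk cc with hg
  have hode : (1 - PowerSeries.X) * (2 * PowerSeries.derivative ℝ g) = g := by
    ext k
    rw [sub_mul, one_mul, map_sub]
    have h2 : ∀ i, PowerSeries.coeff i (2 * PowerSeries.derivative ℝ g)
        = 2 * (cc (i + 1) * (i + 1)) := by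
      intro i
      rw [show (2 : PowerSeries ℝ) = PowerSeries.C 2 from (map_ofNat PowerSeries.C 2).symm,
        PowerSeries.coeff_C_mul,
        PowerSeries.coeff_derivative, hg, PowerSeries.coeff_mk]
    cases k with
    | zero =>
      rw [PowerSeries.coeff_zero_X_mul, h2, hg, PowerSeries.coeff_mk]
      have := cc_succ 0
      push_cast at this ⊢
      linarith
    | succ k =>
      rw [PowerSeries.coeff_succ_X_mul, h2, h2, hg, PowerSeries.coeff_mk]
      have := cc_succ (k + 1)
      push_cast at this ⊢
      linarith
  have hone : (1 - PowerSeries.X) * (g * g) = 1 := by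
    apply PowerSeries.derivative.ext
    · have : PowerSeries.derivative ℝ ((1 - PowerSeries.X) * (g * g))
          = g * ((1 - PowerSeries.X) * (2 * PowerSeries.derivative ℝ g) - g) := by
        simp only [Derivation.leibniz, map_sub, smul_eq_mul, Derivation.map_one_eq_zero,
          PowerSeries.derivative_X]
        ring
      rw [this, hode]
      simp
    · simp [hg, cc_zero]
  have hgg : g * g = PowerSeries.mk 1 := by
    have h1 := PowerSeries.mk_one_mul_one_sub_eq_one ℝ
    calc g * g = (PowerSeries.mk 1 * (1 - PowerSeries.X)) * (g * g) := by rw [h1, one_mul]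
      _ = PowerSeries.mk 1 * ((1 - PowerSeries.X) * (g * g)) := by ring
      _ = PowerSeries.mk 1 := by rw [hone, mul_one]
  have := congrArg (PowerSeries.coeff n) hgg
  simpa [PowerSeries.coeff_mul, hg] using this

section RCLike
variable {𝕜 : Type*} [RCLike 𝕜]

lemma summable_cc_norm {z : 𝕜} (hz : ‖z‖ < 1) : Summable fun n => ‖((cc n : ℝ) : 𝕜) * z ^ n‖ := by
  refine Summable.of_nonneg_of_le (fun n => norm_nonneg _) (fun n => ?_)
    (summable_geometric_of_lt_one (norm_nonneg z) hz)
  rw [norm_mul, norm_pow, RCLike.norm_ofReal, abs_of_pos (cc_pos n)]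
  exact mul_le_of_le_one_left (by positivity) (cc_le_one n)

/-- The power series with coefficients `c n` squares to `(1 - z)⁻¹`. -/
lemma cc_sq {z : 𝕜} (hz : ‖z‖ < 1) :
    (∑' n, ((cc n : ℝ) : 𝕜) * z ^ n) ^ 2 = (1 - z)⁻¹ := by
  have hs := summable_cc_norm hz
  rw [sq, tsum_mul_tsum_eq_tsum_sum_antidiagonal_of_summable_norm hs hs,
    ← tsum_geometric_of_norm_lt_one hz]
  congr 1
  ext n
  have : ∀ ij ∈ Finset.HasAntidiagonal.antidiagonal n,
      ((cc ij.1 : ℝ) : 𝕜) * z ^ ij.1 * (((cc ij.2 : ℝ) : 𝕜) * z ^ ij.2) = ((cc ij.1 * cc ij.2 : ℝ) : 𝕜) * z ^ n := by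
    intro ij h
    rw [← Finset.HasAntidiagonal.mem_antidiagonal.1 h]
    push_cast
    ring
  rw [Finset.sum_congr rfl this, ← Finset.sum_mul, ← RCLike.ofReal_sum, cc_conv]
  simp
end RCLike

/-- `c n` expressed through the partial Wallis products. -/
lemma cc_wallis (n : ℕ) : cc n ^ 2 * (2 * n + 1) = (Real.Wallis.W n)⁻¹ := by
  induction n with
  | zero => simp [cc_zero, Real.Wallis.W]
  | succ n ih =>
    have h := cc_succ n
    have h' : cc (n + 1) = (2 * n + 1) / (2 * n + 2) * cc n := by
      field_simp
      linarith
    rw [Real.Wallis.W_succ, mul_inv, ← ih, h']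
    push_cast
    field_simp
    ring

lemma tendsto_sqrt_cc :
    Tendsto (fun n : ℕ => Real.sqrt n * cc n) atTop (nhds (1 / Real.sqrt Real.pi)) := by
  have h1 : Tendsto (fun n : ℕ => (n : ℝ) * cc n ^ 2) atTop (nhds (1 / Real.pi)) := by
    have hW := Real.Wallis.tendsto_W_nhds_pi_div_two.inv₀ (by positivity)
    have h2 : Tendsto (fun n : ℕ => ((n : ℝ) / (n + 1 / 2))) atTop (nhds 1) :=
      tendsto_natCast_div_add_atTop (1 / 2 : ℝ)
    have := (h2.mul hW).mul_const (1 / 2)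
    refine (this.congr fun n => ?_).trans_eq ?_
    · rw [← cc_wallis]
      field_simp
    · congr 1
      field_simp
  have h3 := h1.sqrt
  refine (h3.congr fun n => ?_).trans_eq ?_
  · rw [Real.sqrt_mul n.cast_nonneg, Real.sqrt_sq (cc_pos n).le]
  · rw [Real.sqrt_div zero_le_one, Real.sqrt_one]

lemma sqrt_mul_cc_le_one (n : ℕ) : Real.sqrt n * cc n ≤ 1 := by
  -- `W n ≥ π / 4`, since `(2 * n + 1) / (2 * n + 2) ≥ 1 / 2`.
  have hW : (3 : ℝ) / 4 ≤ Real.Wallis.W n := by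
    refine le_trans ?_ (Real.Wallis.le_W n)
    have h1 : (1 : ℝ) / 2 ≤ (2 * n + 1) / (2 * n + 2) := by
      rw [div_le_div_iff₀ (by norm_num) (by positivity)]
      linarith
    nlinarith [Real.pi_gt_three]
  have h2 : (Real.Wallis.W n)⁻¹ ≤ 4 / 3 := by
    rw [show (4 : ℝ) / 3 = (3 / 4)⁻¹ by norm_num]
    exact inv_anti₀ (by norm_num) hW
  rw [← cc_wallis] at h2
  have h3 : (Real.sqrt n * cc n) ^ 2 ≤ 1 := by
    rw [mul_pow, Real.sq_sqrt n.cast_nonneg]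
    nlinarith [sq_nonneg (cc n)]
  exact (sq_le_one_iff₀ (mul_nonneg (Real.sqrt_nonneg _) (cc_pos n).le)).1 h3

/-! ### Asymptotics of the Fourier coefficients -/

/-- A fixed shift of the index does not change a limit of `√n * u n`. -/
lemma tendsto_sqrt_shift {u : ℕ → ℝ} {L : ℝ}
    (h : Tendsto (fun n : ℕ => Real.sqrt n * u n) atTop (nhds L)) (j : ℕ) :
    Tendsto (fun n : ℕ => Real.sqrt n * u (n + j)) atTop (nhds L) := by
  have h1 := (tendsto_natCast_div_add_atTop (j : ℝ)).sqrt
  have h2 := (tendsto_add_atTop_iff_nat j).2 h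
  have h3 := h1.mul h2
  rw [Real.sqrt_one, one_mul] at h3
  refine h3.congr' ?_
  filter_upwards [eventually_gt_atTop 0] with n hn
  have hn' : (0 : ℝ) < n + j := by positivity
  rw [Real.sqrt_div n.cast_nonneg, Nat.cast_add]
  have := (Real.sqrt_pos.2 hn').ne'
  field_simp

/-- `bb r k = ∑ j, c (j + k) * c j * r ^ (2 * j)`. Up to the factor `(-r) ^ k`, this is the `k`-th
Fourier coefficient of `θ ↦ 1 / |1 + r * exp (i * θ)|`. -/
noncomputable def bb (r : ℝ) (k : ℕ) : ℝ := ∑' j, cc (j + k) * (cc j * r ^ (2 * j))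

/-- The weighted deviation of the sequence `bb r (n + j)`, `j ≥ 0`, from the constant `bb r n`. -/
noncomputable def dd (r : ℝ) (n : ℕ) : ℝ := ∑' j, r ^ j * (bb r n - bb r (n + j))

lemma bb_nonneg {r : ℝ} (h0 : 0 < r) (k : ℕ) : 0 ≤ bb r k :=
  tsum_nonneg fun j => mul_nonneg (cc_pos _).le (mul_nonneg (cc_pos _).le (by positivity))

lemma dd_term_le {r : ℝ} (h0 : 0 < r) (n j : ℕ) : r ^ j * (bb r n - bb r (n + j)) ≤ bb r n * r ^ j := by
  have := mul_nonneg (pow_pos h0 j).le (bb_nonneg h0 (n + j))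
  linarith

section asymptotics
variable {r : ℝ} (h0 : 0 < r) (h1 : r < 1)
include h0 h1

lemma summable_sq_geom : Summable fun j : ℕ => r ^ (2 * j) := by
  simp_rw [pow_mul]
  exact summable_geometric_of_lt_one (by positivity) (by nlinarith)

lemma summable_bb (k : ℕ) : Summable fun j => cc (j + k) * (cc j * r ^ (2 * j)) := by
  refine Summable.of_nonneg_of_le (fun j => ?_) (fun j => ?_) (summable_sq_geom h0 h1)
  · have := cc_pos (j + k)
    have := cc_pos j
    positivity
  · rw [← mul_assoc]
    exact mul_le_of_le_one_left (by positivity)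
      (mul_le_one₀ (cc_le_one _) (cc_pos _).le (cc_le_one _))

lemma bb_antitone : Antitone (bb r) := by
  intro k l hkl
  refine (summable_bb h0 h1 l).tsum_le_tsum (fun j => ?_) (summable_bb h0 h1 k)
  exact mul_le_mul_of_nonneg_right (cc_antitone (by omega))
    (mul_nonneg (cc_pos _).le (by positivity))

lemma tendsto_sqrt_bb : Tendsto (fun n : ℕ => Real.sqrt n * bb r n) atTop
    (nhds (1 / Real.sqrt Real.pi * (Real.sqrt (1 - r ^ 2))⁻¹)) := by
  have hlim : ∑' j, 1 / Real.sqrt Real.pi * (cc j * r ^ (2 * j))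
      = 1 / Real.sqrt Real.pi * (Real.sqrt (1 - r ^ 2))⁻¹ := by
    rw [tsum_mul_left]
    congr 1
    have hr : ‖r ^ 2‖ < 1 := by
      rw [Real.norm_of_nonneg (by positivity)]
      nlinarith
    have h := cc_sq (𝕜 := ℝ) hr
    simp only [RCLike.ofReal_real_eq_id, id, ← pow_mul] at h
    rw [← Real.sqrt_inv, ← h, Real.sqrt_sq]
    exact tsum_nonneg fun j => mul_nonneg (cc_pos _).le (by positivity)
  rw [← hlim]
  have hfun : (fun n : ℕ => Real.sqrt n * bb r n)
      = fun n : ℕ => ∑' j, Real.sqrt n * cc (n + j) * (cc j * r ^ (2 * j)) := by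
    ext n
    rw [bb, ← tsum_mul_left]
    exact tsum_congr fun j => by rw [add_comm, mul_assoc]
  rw [hfun]
  refine tendsto_tsum_of_dominated_convergence (summable_sq_geom h0 h1)
    (fun j => (tendsto_sqrt_shift tendsto_sqrt_cc j).mul_const _) (Eventually.of_forall fun n j => ?_)
  have hc := cc_pos j
  have hc' := cc_pos (n + j)
  rw [Real.norm_of_nonneg (by positivity), ← mul_assoc]
  refine mul_le_of_le_one_left (by positivity) (mul_le_one₀ ?_ hc.le (cc_le_one _))
  exact (mul_le_mul_of_nonneg_left (cc_antitone (by omega)) (Real.sqrt_nonneg _)).trans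
    (sqrt_mul_cc_le_one n)

lemma dd_term_nonneg (n j : ℕ) : 0 ≤ r ^ j * (bb r n - bb r (n + j)) :=
  mul_nonneg (by positivity) (sub_nonneg.2 (bb_antitone h0 h1 (by omega)))

lemma summable_dd (n : ℕ) : Summable fun j => r ^ j * (bb r n - bb r (n + j)) :=
  Summable.of_nonneg_of_le (dd_term_nonneg h0 h1 n) (dd_term_le h0 n)
    ((summable_geometric_of_lt_one h0.le h1).mul_left _)

lemma tendsto_sqrt_dd : Tendsto (fun n : ℕ => Real.sqrt n * dd r n) atTop (nhds 0) := by
  have hb := tendsto_sqrt_bb h0 h1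
  obtain ⟨C, hC⟩ := hb.bddAbove_range
  have hfun : (fun n : ℕ => Real.sqrt n * dd r n)
      = fun n : ℕ => ∑' j, r ^ j * (Real.sqrt n * bb r n - Real.sqrt n * bb r (n + j)) := by
    ext n
    rw [dd, ← tsum_mul_left]
    exact tsum_congr fun j => by ring
  have hz : ∑' j : ℕ, r ^ j * (0 : ℝ) = 0 := by simp
  rw [hfun, ← hz]
  refine tendsto_tsum_of_dominated_convergence
    ((summable_geometric_of_lt_one h0.le h1).mul_left C) (fun j => ?_)
    (Eventually.of_forall fun n j => ?_)
  · refine Tendsto.const_mul _ ?_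
    simpa using hb.sub (tendsto_sqrt_shift hb j)
  · have h2 := dd_term_nonneg h0 h1 n j
    have h3 := dd_term_le h0 n j
    have h4 : Real.sqrt n * bb r n ≤ C := hC ⟨n, rfl⟩
    have hs := Real.sqrt_nonneg n
    rw [show r ^ j * (Real.sqrt n * bb r n - Real.sqrt n * bb r (n + j))
      = Real.sqrt n * (r ^ j * (bb r n - bb r (n + j))) by ring,
      Real.norm_of_nonneg (mul_nonneg hs h2)]
    calc _ ≤ Real.sqrt n * (bb r n * r ^ j) := mul_le_mul_of_nonneg_left h3 hs
      _ = (Real.sqrt n * bb r n) * r ^ j := by ring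
      _ ≤ C * r ^ j := mul_le_mul_of_nonneg_right h4 (by positivity)

end asymptotics

/-! ### The Fourier series of the reciprocal weight -/

/-- Pairs of naturals, indexed by their difference and their minimum. -/
def diffEquiv : ℤ × ℕ ≃ ℕ × ℕ where
  toFun p := (p.2 + p.1.toNat, p.2 + (-p.1).toNat)
  invFun q := ((q.1 : ℤ) - q.2, min q.1 q.2)
  left_inv p := by ext <;> simp; omega
  right_inv q := by ext <;> simp <;> omega

/-- `ww r θ = |1 + r * exp (i * θ)|`. -/
noncomputable def ww (r θ : ℝ) : ℝ := Real.sqrt (1 + 2 * r * Real.cos θ + r ^ 2)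

lemma norm_one_add (r θ : ℝ) : ‖1 + (r : ℂ) * Complex.exp (θ * Complex.I)‖ = ww r θ := by
  rw [Complex.norm_def, Complex.normSq_apply, ww]
  congr 1
  simp [Complex.exp_ofReal_mul_I_re, Complex.exp_ofReal_mul_I_im]
  nlinarith [Real.sin_sq_add_cos_sq θ]

lemma cc_sq_complex {z : ℂ} (hz : ‖z‖ < 1) :
    (Summable fun n => ‖(cc n : ℂ) * z ^ n‖) ∧ (∑' n, (cc n : ℂ) * z ^ n) ^ 2 = (1 - z)⁻¹ := by
  have h1 := summable_cc_norm hz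
  have h2 := cc_sq hz
  simp only [Complex.coe_algebraMap] at h1 h2
  exact ⟨h1, h2⟩

lemma hasSum_mul_of_norm {R : Type*} [NormedRing R] [CompleteSpace R] {f g : ℕ → R}
    (hf : Summable fun n => ‖f n‖) (hg : Summable fun n => ‖g n‖) :
    HasSum (fun x : ℕ × ℕ => f x.1 * g x.2) ((∑' n, f n) * ∑' n, g n) :=
  hf.of_norm.hasSum.mul hg.of_norm.hasSum (summable_mul_of_summable_norm hf hg)

lemma hasSum_mul_cc {z w : ℂ} (hz : ‖z‖ < 1) (hw : ‖w‖ < 1) :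
    HasSum (fun x : ℕ × ℕ => (cc x.1 : ℂ) * z ^ x.1 * ((cc x.2 : ℂ) * w ^ x.2))
      ((∑' n, (cc n : ℂ) * z ^ n) * ∑' n, (cc n : ℂ) * w ^ n) :=
  hasSum_mul_of_norm (f := fun n => (cc n : ℂ) * z ^ n) (g := fun n => (cc n : ℂ) * w ^ n)
    (cc_sq_complex hz).1 (cc_sq_complex hw).1

lemma hasSum_mul_conj {z : ℂ} (hz : ‖z‖ < 1) :
    HasSum (fun x : ℕ × ℕ => (cc x.1 : ℂ) * z ^ x.1 * ((cc x.2 : ℂ) * (starRingEnd ℂ) z ^ x.2))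
      ((‖1 - z‖⁻¹ : ℝ) : ℂ) := by
  have hz' : ‖(starRingEnd ℂ) z‖ < 1 := by rwa [RCLike.norm_conj]
  have hF' : ∑' n, (cc n : ℂ) * (starRingEnd ℂ) z ^ n
      = (starRingEnd ℂ) (∑' n, (cc n : ℂ) * z ^ n) := by
    rw [Complex.conj_tsum]
    exact tsum_congr fun n => by simp
  have hval : ‖∑' n, (cc n : ℂ) * z ^ n‖ ^ 2 = ‖1 - z‖⁻¹ := by
    rw [← norm_pow, (cc_sq_complex hz).2, norm_inv]
  have hp := hasSum_mul_cc hz hz'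
  rwa [hF', Complex.mul_conj, Complex.normSq_eq_norm_sq, hval] at hp

/-- The double series of `hasSum_mul_conj` for `z = -r * exp (i * θ)`, in real form. -/
lemma hasSum_double {r : ℝ} (h0 : 0 < r) (h1 : r < 1) (θ : ℝ) : HasSum (fun x : ℕ × ℕ =>
    cc x.1 * cc x.2 * (-r) ^ (x.1 + x.2) * Real.cos (((x.1 : ℝ) - x.2) * θ)) (ww r θ)⁻¹ := by
  have hz : ‖-(r : ℂ) * Complex.exp (θ * Complex.I)‖ < 1 := by
    rw [norm_mul, Complex.norm_exp_ofReal_mul_I, norm_neg, Complex.norm_real,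
      Real.norm_of_nonneg h0.le, mul_one]
    exact h1
  have hconj : (starRingEnd ℂ) (-(r : ℂ) * Complex.exp (θ * Complex.I))
      = -(r : ℂ) * Complex.exp (-(θ * Complex.I)) := by
    simp [← Complex.exp_conj]
  have hre := Complex.hasSum_re (hasSum_mul_conj hz)
  rw [Complex.ofReal_re, hconj, neg_mul, sub_neg_eq_add, norm_one_add] at hre
  refine hre.congr_fun fun x => ?_
  have : (cc x.1 : ℂ) * (-((r : ℂ) * Complex.exp (θ * Complex.I))) ^ x.1
        * ((cc x.2 : ℂ) * (-(r : ℂ) * Complex.exp (-(θ * Complex.I))) ^ x.2)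
      = ((cc x.1 * cc x.2 * (-r) ^ (x.1 + x.2) : ℝ) : ℂ)
        * Complex.exp (((((x.1 : ℝ) - x.2) * θ : ℝ) : ℂ) * Complex.I) := by
    rw [← neg_mul, mul_pow, mul_pow, ← Complex.exp_nat_mul, ← Complex.exp_nat_mul]
    rw [show ((((x.1 : ℝ) - x.2) * θ : ℝ) : ℂ) * Complex.I
      = x.1 * (θ * Complex.I) + x.2 * (-(θ * Complex.I)) by push_cast; ring, Complex.exp_add]
    push_cast
    ring
  rw [this, Complex.re_ofReal_mul, Complex.exp_ofReal_mul_I_re]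

/-- The Fourier series of `θ ↦ 1 / |1 + r * exp (i * θ)|`, obtained by multiplying the
binomial series of `(1 + r * exp (i * θ)) ^ (-1/2)` by its conjugate and summing along the diagonals
`i - j = d`, then pairing `d` with `-d`. The pairing counts `d = 0` twice, whence the extra `bb r 0`. -/
lemma hasSum_fourier {r : ℝ} (h0 : 0 < r) (h1 : r < 1) (θ : ℝ) :
    HasSum (fun k : ℕ => 2 * ((-r) ^ k * bb r k) * Real.cos (k * θ))
      ((ww r θ)⁻¹ + bb r 0) := by
  have hZ := (diffEquiv.hasSum_iff.2 (hasSum_double h0 h1 θ)).prod_fiberwise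
    (g := fun d : ℤ => (-r) ^ d.natAbs * bb r d.natAbs * Real.cos (d * θ)) ?_
  · have hN := hZ.nat_add_neg
    have hsum : (ww r θ)⁻¹ + (-r) ^ (0 : ℤ).natAbs * bb r (0 : ℤ).natAbs * Real.cos ((0 : ℤ) * θ)
        = (ww r θ)⁻¹ + bb r 0 := by simp
    rw [hsum] at hN
    refine hN.congr_fun fun k => ?_
    simp only [Int.natAbs_natCast, Int.natAbs_neg, Int.cast_neg, Int.cast_natCast, neg_mul,
      Real.cos_neg]
    ring
  · intro d
    have hb := ((summable_bb h0 h1 d.natAbs).hasSum.mul_left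
      ((-r) ^ d.natAbs * Real.cos (d * θ)))
    have : (-r) ^ d.natAbs * bb r d.natAbs * Real.cos (d * θ)
      = (-r) ^ d.natAbs * Real.cos (d * θ) * bb r d.natAbs := by ring
    rw [this]
    refine hb.congr_fun fun j => ?_
    have hr2 : ∀ i : ℕ, r ^ (2 * i) = (-r) ^ (2 * i) := fun i => by
      rw [pow_mul, pow_mul, neg_sq]
    have hd : ((((diffEquiv (d, j)).1 : ℕ) : ℝ) - ((diffEquiv (d, j)).2 : ℕ)) = d := by
      have : (((diffEquiv (d, j)).1 : ℕ) : ℤ) - ((diffEquiv (d, j)).2 : ℕ) = d := by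
        simp only [diffEquiv, Equiv.coe_fn_mk]
        omega
      exact_mod_cast this
    simp only [Function.comp]
    rw [hd, hr2]
    rcases le_total 0 d with h | h
    · have e1 : diffEquiv (d, j) = (j + d.natAbs, j) := by
        simp only [diffEquiv, Equiv.coe_fn_mk, Prod.mk.injEq]
        omega
      rw [e1]
      ring
    · have e1 : diffEquiv (d, j) = (j, j + d.natAbs) := by
        simp only [diffEquiv, Equiv.coe_fn_mk, Prod.mk.injEq]
        omega
      rw [e1]
      ring

/-! ### The weighted error of the truncated series -/

/-- `phase r θ` is the argument of `1 + r * exp (i * θ)`; for `0 < r < 1` this number has positive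
real part, so that `arctan` applies. -/
noncomputable def phase (r θ : ℝ) : ℝ := Real.arctan (r * Real.sin θ / (1 + r * Real.cos θ))

/-- The cosine polynomial of degree less than `n` obtained by truncating `hasSum_fourier`. The term
`k = 0` of the sum is `2 * bb r 0`, so subtracting `bb r 0` leaves the mean value. -/
noncomputable def trunc (r : ℝ) (n : ℕ) (θ : ℝ) : ℝ :=
  ∑ k ∈ Finset.range n, 2 * ((-r) ^ k * bb r k) * Real.cos (k * θ) - bb r 0

lemma le_ww {r : ℝ} (h0 : 0 < r) (θ : ℝ) : 1 - r ≤ ww r θ := by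
  refine Real.le_sqrt_of_sq_le ?_
  nlinarith [Real.neg_one_le_cos θ]

section error
variable {r : ℝ} (h0 : 0 < r) (h1 : r < 1)
include h0 h1

lemma one_add_cos_pos (θ : ℝ) : 0 < 1 + r * Real.cos θ := by
  nlinarith [Real.neg_one_le_cos θ]

lemma ww_radicand_pos (θ : ℝ) : 0 < 1 + 2 * r * Real.cos θ + r ^ 2 := by
  nlinarith [Real.neg_one_le_cos θ, sq_pos_of_pos (sub_pos.2 h1)]

lemma ww_pos (θ : ℝ) : 0 < ww r θ := Real.sqrt_pos.2 (ww_radicand_pos h0 h1 θ)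

lemma ww_sq (θ : ℝ) : ww r θ ^ 2 = 1 + 2 * r * Real.cos θ + r ^ 2 :=
  Real.sq_sqrt (ww_radicand_pos h0 h1 θ).le

lemma ww_le (θ : ℝ) : ww r θ ≤ 1 + r := by
  refine Real.sqrt_le_iff.2 ⟨by linarith, ?_⟩
  nlinarith [Real.cos_le_one θ]

lemma ww_mul_cos_phase (θ : ℝ) : ww r θ * Real.cos (phase r θ) = 1 + r * Real.cos θ := by
  have hu := one_add_cos_pos h0 h1 θ
  have hw := ww_pos h0 h1 θ
  have h : Real.sqrt (1 + (r * Real.sin θ / (1 + r * Real.cos θ)) ^ 2)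
      = ww r θ / (1 + r * Real.cos θ) := by
    rw [← Real.sqrt_sq (div_pos hw hu).le, div_pow, div_pow, ww_sq h0 h1]
    congr 1
    field_simp
    nlinarith [Real.sin_sq_add_cos_sq θ]
  rw [phase, Real.cos_arctan, h]
  field_simp

lemma ww_mul_sin_phase (θ : ℝ) : ww r θ * Real.sin (phase r θ) = r * Real.sin θ := by
  have hu := one_add_cos_pos h0 h1 θ
  have hc := Real.cos_arctan_pos (r * Real.sin θ / (1 + r * Real.cos θ))
  have h := Real.tan_arctan (r * Real.sin θ / (1 + r * Real.cos θ))
  have hcos := ww_mul_cos_phase h0 h1 θ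
  rw [Real.tan_eq_sin_div_cos, div_eq_div_iff hc.ne' hu.ne', ← phase] at h
  refine mul_right_cancel₀ hu.ne' ?_
  rw [mul_assoc, h, ← hcos]
  ring

/-- The leading part of the error: a geometric series that sums to a pure oscillation after
multiplication by the weight. -/
lemma hasSum_main (n : ℕ) (θ : ℝ) :
    HasSum (fun j : ℕ => (-r) ^ j * Real.cos ((n + j : ℕ) * θ))
      (Real.cos (n * θ - phase r θ) / ww r θ) := by
  have hw := ww_pos h0 h1 θ
  set z : ℂ := -((r : ℂ) * Complex.exp (θ * Complex.I)) with hz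
  have hzn : ‖z‖ < 1 := by
    rw [hz, norm_neg, norm_mul, Complex.norm_exp_ofReal_mul_I, Complex.norm_real,
      Real.norm_of_nonneg h0.le, mul_one]
    exact h1
  have hs := Complex.hasSum_re
    ((hasSum_geometric_of_norm_lt_one hzn).mul_left (Complex.exp ((n * θ : ℝ) * Complex.I)))
  have hval : (Complex.exp ((n * θ : ℝ) * Complex.I) * (1 - z)⁻¹).re
      = Real.cos (n * θ - phase r θ) / ww r θ := by
    have hpolar : 1 - z = (ww r θ : ℂ) * Complex.exp (phase r θ * Complex.I) := by
      apply Complex.ext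
      · rw [Complex.re_ofReal_mul, Complex.exp_ofReal_mul_I_re, ww_mul_cos_phase h0 h1]
        simp [hz, Complex.exp_ofReal_mul_I_re]
      · rw [Complex.im_ofReal_mul, Complex.exp_ofReal_mul_I_im, ww_mul_sin_phase h0 h1]
        simp [hz, Complex.exp_ofReal_mul_I_im]
    have : Complex.exp ((n * θ : ℝ) * Complex.I) * (1 - z)⁻¹
        = ((ww r θ)⁻¹ : ℝ) * Complex.exp ((n * θ - phase r θ : ℝ) * Complex.I) := by
      rw [hpolar, mul_inv, ← Complex.exp_neg, show ((n * θ - phase r θ : ℝ) : ℂ) * Complex.I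
        = (n * θ : ℝ) * Complex.I + -(phase r θ * Complex.I) by push_cast; ring, Complex.exp_add]
      push_cast
      ring
    rw [this, Complex.re_ofReal_mul, Complex.exp_ofReal_mul_I_re]
    ring
  rw [hval] at hs
  refine hs.congr_fun fun j => ?_
  have : Complex.exp ((n * θ : ℝ) * Complex.I) * z ^ j
      = (((-r) ^ j : ℝ) : ℂ) * Complex.exp ((((n + j : ℕ) * θ : ℝ) : ℂ) * Complex.I) := by
    rw [hz, ← neg_mul, mul_pow, ← Complex.exp_nat_mul, show (((n + j : ℕ) * θ : ℝ) : ℂ) * Complex.I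
      = (n * θ : ℝ) * Complex.I + j * (θ * Complex.I) by push_cast; ring, Complex.exp_add]
    push_cast
    ring
  rw [this, Complex.re_ofReal_mul, Complex.exp_ofReal_mul_I_re]

/-- The weighted error of the truncated Fourier series is a pure oscillation up to a
remainder controlled by `dd`. -/
lemma error_estimate (n : ℕ) (θ : ℝ) :
    |1 - ww r θ * trunc r n θ - 2 * (-r) ^ n * bb r n * Real.cos (n * θ - phase r θ)|
      ≤ 2 * r ^ n * ((1 + r) * dd r n) := by
  have hw := ww_pos h0 h1 θ
  have hF := (hasSum_nat_add_iff' n).2 (hasSum_fourier h0 h1 θ)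
  have hM := (hasSum_main h0 h1 n θ).mul_left (2 * (-r) ^ n * bb r n)
  have hD := (hF.sub hM).mul_left (ww r θ)
  have hval : ww r θ * ((ww r θ)⁻¹ + bb r 0
        - ∑ k ∈ Finset.range n, 2 * ((-r) ^ k * bb r k) * Real.cos (k * θ)
        - 2 * (-r) ^ n * bb r n * (Real.cos (n * θ - phase r θ) / ww r θ))
      = 1 - ww r θ * trunc r n θ - 2 * (-r) ^ n * bb r n * Real.cos (n * θ - phase r θ) := by
    rw [trunc]
    generalize ∑ k ∈ Finset.range n, 2 * ((-r) ^ k * bb r k) * Real.cos (k * θ) = S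
    field_simp
    ring
  rw [hval] at hD
  have hB := (summable_dd h0 h1 n).hasSum.mul_left (2 * r ^ n * (1 + r))
  rw [← Real.norm_eq_abs]
  refine (hD.norm_le_of_bounded (hB.congr_fun fun j => rfl) fun j => ?_).trans_eq ?_
  · have hc : (fun b => 2 * ((-r) ^ (b + n) * bb r (b + n)) * Real.cos ((b + n : ℕ) * θ)
        - 2 * (-r) ^ n * bb r n * ((-r) ^ b * Real.cos ((n + b : ℕ) * θ))) j
        = 2 * (-r) ^ n * ((-r) ^ j * (bb r (n + j) - bb r n)) * Real.cos ((n + j : ℕ) * θ) := by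
      simp only [add_comm j n]
      ring
    have hn := dd_term_nonneg h0 h1 n j
    have hanti : bb r (n + j) ≤ bb r n := bb_antitone h0 h1 (by omega)
    simp only at hc
    rw [hc, Real.norm_eq_abs, abs_mul, abs_mul, abs_mul, abs_mul, abs_mul, abs_pow, abs_pow,
      abs_neg, abs_of_pos h0, abs_of_pos hw, abs_two, abs_of_nonpos (sub_nonpos.2 hanti), neg_sub]
    have hcos := Real.abs_cos_le_one ((n + j : ℕ) * θ)
    calc ww r θ * (2 * r ^ n * (r ^ j * (bb r n - bb r (n + j))) * |Real.cos ((n + j : ℕ) * θ)|)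
        ≤ (1 + r) * (2 * r ^ n * (r ^ j * (bb r n - bb r (n + j))) * 1) := by
          gcongr
          exact ww_le h0 h1 θ
      _ = 2 * r ^ n * (1 + r) * (r ^ j * (bb r n - bb r (n + j))) := by ring
  · rw [dd]
    ring

/-- The derivative is positive because `|1 + r * exp (i * θ)| ^ 2 - (r * cos θ + r ^ 2)`
equals `1 + r * cos θ`. -/
lemma phase_strictMono {n : ℕ} (hn : 1 ≤ n) : StrictMono fun θ => n * θ - phase r θ := by
  have hd : ∀ θ, HasDerivAt (fun θ => n * θ - phase r θ)
      (n - (r * Real.cos θ + r ^ 2) / ww r θ ^ 2) θ := by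
    intro θ
    have hu := one_add_cos_pos h0 h1 θ
    have hw := ww_pos h0 h1 θ
    have h2 := (((Real.hasDerivAt_sin θ).const_mul r).div
      (((Real.hasDerivAt_cos θ).const_mul r).const_add 1) hu.ne').arctan
    have h3 := ((hasDerivAt_id θ).const_mul (n : ℝ)).sub h2
    refine h3.congr_deriv ?_
    have hpos : 0 < (1 + r * Real.cos θ) ^ 2 + (r * Real.sin θ) ^ 2 := by positivity
    have hww : ww r θ ^ 2 = (1 + r * Real.cos θ) ^ 2 + (r * Real.sin θ) ^ 2 := by
      rw [ww_sq h0 h1]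
      nlinarith [Real.sin_sq_add_cos_sq θ]
    rw [hww, mul_one]
    congr 1
    have hnum : r * Real.cos θ + r ^ 2 = r * Real.cos θ * (1 + r * Real.cos θ)
        - r * Real.sin θ * (r * -Real.sin θ) := by
      nlinarith [Real.sin_sq_add_cos_sq θ]
    rw [hnum]
    simp only [Pi.div_apply]
    field_simp
  refine strictMono_of_deriv_pos fun θ => ?_
  rw [(hd θ).deriv, sub_pos, div_lt_iff₀ (pow_pos (ww_pos h0 h1 θ) 2), ww_sq h0 h1]
  have hu := one_add_cos_pos h0 h1 θ
  have hn' : (1 : ℝ) ≤ n := by exact_mod_cast hn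
  nlinarith [ww_radicand_pos h0 h1 θ]

lemma phase_continuous : Continuous (phase r) := by
  unfold phase
  refine Real.continuous_arctan.comp ?_
  exact (by fun_prop : Continuous fun θ => r * Real.sin θ).div (by fun_prop)
    fun θ => (one_add_cos_pos h0 h1 θ).ne'

/-- The alternation points: the phase `n * θ - phase r θ` runs through `0, π, …, n * π`. -/
lemma exists_alternation {n : ℕ} (hn : 1 ≤ n) : ∃ t : ℕ → ℝ,
    (∀ j ≤ n, t j ∈ Icc 0 Real.pi ∧ Real.cos (n * t j - phase r (t j)) = (-1) ^ j) ∧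
    ∀ j < n, t j < t (j + 1) := by
  have hcont : Continuous fun θ => n * θ - phase r θ :=
    (continuous_const.mul continuous_id).sub (phase_continuous h0 h1)
  have hex : ∀ j : ℕ, ∃ θ, j ≤ n → θ ∈ Icc 0 Real.pi ∧ n * θ - phase r θ = j * Real.pi := by
    intro j
    by_cases hj : j ≤ n
    · have hmem : (j : ℝ) * Real.pi ∈ Icc (n * 0 - phase r 0) (n * Real.pi - phase r Real.pi) := by
        have hj' : (j : ℝ) ≤ n := by exact_mod_cast hj
        simp only [phase, Real.sin_zero, Real.sin_pi, mul_zero, zero_div, Real.arctan_zero, sub_zero]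
        exact ⟨by positivity, mul_le_mul_of_nonneg_right hj' Real.pi_pos.le⟩
      obtain ⟨θ, h, h'⟩ := intermediate_value_Icc Real.pi_pos.le hcont.continuousOn hmem
      exact ⟨θ, fun _ => ⟨h, h'⟩⟩
    · exact ⟨0, fun h => absurd h hj⟩
  choose t ht using hex
  refine ⟨t, fun j hj => ⟨(ht j hj).1, ?_⟩, fun j hj => ?_⟩
  · rw [(ht j hj).2, Real.cos_nat_mul_pi]
  · refine (phase_strictMono h0 h1 hn).lt_iff_lt.1 ?_
    change n * t j - phase r (t j) < n * t (j + 1) - phase r (t (j + 1))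
    rw [(ht j hj.le).2, (ht (j + 1) hj).2]
    push_cast
    nlinarith [Real.pi_pos]

end error

/-! ### Polynomials and the change of variable -/

/-- A polynomial of degree less than `n` cannot alternate in sign at `n + 1` successive points. -/
lemma no_alternation {D : Polynomial ℝ} {n : ℕ} (hdeg : D.natDegree < n) {t : ℕ → ℝ} {σ : ℝ}
    (ht : ∀ j < n, t (j + 1) < t j) (hpos : ∀ j ≤ n, 0 < σ * (-1) ^ j * D.eval (t j)) : False := by
  have hroot : ∀ j : Fin n, ∃ s ∈ Ioo (t (j + 1)) (t j), D.eval s = 0 := by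
    intro j
    have hc : ContinuousOn (fun x => σ * (-1) ^ (j : ℕ) * D.eval x) (Icc (t (j + 1)) (t j)) :=
      (continuous_const.mul D.continuous).continuousOn
    have hlt : σ * (-1) ^ (j : ℕ) * D.eval (t (j + 1)) < 0 := by
      have := hpos (j + 1) j.2
      rw [pow_succ] at this
      linarith
    obtain ⟨s, hs, h⟩ := intermediate_value_Ioo (ht j j.2).le hc ⟨hlt, hpos j j.2.le⟩
    refine ⟨s, hs, ?_⟩
    have h2 := hpos j j.2.le
    have h3 : σ * (-1) ^ (j : ℕ) ≠ 0 := left_ne_zero_of_mul h2.ne'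
    exact (mul_eq_zero.1 h).resolve_left h3
  choose s hs hs0 using hroot
  have hanti : ∀ k j : ℕ, j ≤ k → k ≤ n → t k ≤ t j := by
    intro k j hjk
    induction hjk with
    | refl => exact fun _ => le_rfl
    | step _ ih => exact fun h => (ht _ h).le.trans (ih (by omega))
  have hinj : StrictAnti s := fun i j hij =>
    ((hs j).2.trans_le (hanti j (i + 1) (by exact hij) j.2.le)).trans (hs i).1
  have hD := Polynomial.eq_zero_of_natDegree_lt_card_of_eval_eq_zero D hinj.injective hs0
    (by simpa using hdeg)
  have := hpos 0 (Nat.zero_le n)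
  simp [hD] at this

/-- The algebraic polynomial `q` with `q (x ^ 2) = trunc r n θ / κ` whenever
`x = κ * ww r θ`; the affine change of variable turns `x ^ 2` into `cos θ`. -/
noncomputable def QQ (r κ : ℝ) (n : ℕ) : Polynomial ℝ :=
  Polynomial.C κ⁻¹ * (∑ k ∈ Finset.range n, Polynomial.C (2 * ((-r) ^ k * bb r k)) *
    (Polynomial.Chebyshev.T ℝ k).comp
      (Polynomial.C (1 / (2 * r * κ ^ 2)) * Polynomial.X - Polynomial.C ((1 + r ^ 2) / (2 * r)))
    - Polynomial.C (bb r 0))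

lemma QQ_natDegree (r κ : ℝ) (m : ℕ) : (QQ r κ (m + 1)).natDegree ≤ m := by
  refine (Polynomial.natDegree_C_mul_le _ _).trans
    ((Polynomial.natDegree_sub_le_of_le (m := m) (n := m) ?_ ?_).trans (max_self m).le)
  · refine Polynomial.natDegree_sum_le_of_forall_le _ _ fun k hk => ?_
    refine (Polynomial.natDegree_C_mul_le _ _).trans ?_
    rw [Polynomial.natDegree_comp, Polynomial.Chebyshev.natDegree_T, Int.natAbs_natCast]
    have h : (Polynomial.C (1 / (2 * r * κ ^ 2)) * Polynomial.X
        - Polynomial.C ((1 + r ^ 2) / (2 * r))).natDegree ≤ 1 := by compute_degree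
    have hk' : k ≤ m := by
      have := Finset.mem_range.1 hk
      omega
    nlinarith
  · simp

lemma QQ_eval {r κ : ℝ} (h0 : 0 < r) (h1 : r < 1) (hκ : 0 < κ) (n : ℕ) (θ : ℝ) :
    (QQ r κ n).eval ((κ * ww r θ) ^ 2) = κ⁻¹ * trunc r n θ := by
  have hlin : 1 / (2 * r * κ ^ 2) * (κ * ww r θ) ^ 2 - (1 + r ^ 2) / (2 * r) = Real.cos θ := by
    rw [mul_pow, ww_sq h0 h1]
    field_simp
    ring
  simp only [QQ, trunc, Polynomial.eval_mul, Polynomial.eval_C, Polynomial.eval_sub,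
    Polynomial.eval_finsetSum, Polynomial.eval_comp, Polynomial.eval_X, hlin,
    Polynomial.Chebyshev.T_real_cos, Int.cast_natCast]

/-- Every point of `[κ * (1 - r), κ * (1 + r)]` has the form `κ * |1 + r * exp (i * θ)|`. -/
lemma exists_angle {r κ x : ℝ} (h0 : 0 < r) (hκ : 0 < κ)
    (hx1 : κ * (1 - r) ≤ x) (hx2 : x ≤ κ * (1 + r)) (hx0 : 0 < x) (h1 : r < 1) :
    ∃ θ, x = κ * ww r θ := by
  have hxk : x = κ * (x / κ) := by field_simp
  set y := x / κ with hy
  have hy0 : 0 < y := div_pos hx0 hκ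
  have hy1 : 1 - r ≤ y := by rw [hy, le_div_iff₀ hκ]; linarith
  have hy2 : y ≤ 1 + r := by rw [hy, div_le_iff₀ hκ]; linarith
  refine ⟨Real.arccos ((y ^ 2 - 1 - r ^ 2) / (2 * r)), ?_⟩
  rw [ww, Real.cos_arccos]
  · rw [hxk, show 1 + 2 * r * ((y ^ 2 - 1 - r ^ 2) / (2 * r)) + r ^ 2 = y ^ 2 by field_simp; ring,
      Real.sqrt_sq hy0.le]
  · rw [le_div_iff₀ (by linarith)]
    nlinarith
  · rw [div_le_iff₀ (by linarith)]
    nlinarith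

/-- The odd part of a polynomial of degree at most `2 * m + 1` has the form `x * q (x ^ 2)`. -/
lemma exists_odd_part {p : Polynomial ℝ} {m : ℕ} (hp : p.natDegree ≤ 2 * m + 1) :
    ∃ q : Polynomial ℝ, q.natDegree ≤ m ∧
      ∀ x, x * q.eval (x ^ 2) = (p.eval x - p.eval (-x)) / 2 := by
  refine ⟨∑ i ∈ Finset.range (m + 1), Polynomial.C (p.coeff (2 * i + 1)) * Polynomial.X ^ i, ?_, ?_⟩
  · refine Polynomial.natDegree_sum_le_of_forall_le _ _ fun k hk => ?_
    refine (Polynomial.natDegree_C_mul_X_pow_le _ _).trans ?_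
    have := Finset.mem_range.1 hk
    omega
  · intro x
    have hlt : p.natDegree < 2 * (m + 1) := by omega
    rw [Polynomial.eval_eq_sum_range' hlt, Polynomial.eval_eq_sum_range' hlt,
      Polynomial.eval_finsetSum]
    simp only [Polynomial.eval_mul, Polynomial.eval_C, Polynomial.eval_pow, Polynomial.eval_X]
    have key : ∀ M : ℕ, x * ∑ i ∈ Finset.range M, p.coeff (2 * i + 1) * (x ^ 2) ^ i
        = (∑ i ∈ Finset.range (2 * M), p.coeff i * x ^ i
          - ∑ i ∈ Finset.range (2 * M), p.coeff i * (-x) ^ i) / 2 := by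
      intro M
      induction M with
      | zero => simp
      | succ M ih =>
        rw [show 2 * (M + 1) = 2 * M + 1 + 1 by ring, Finset.sum_range_succ, mul_add, ih]
        simp only [Finset.sum_range_succ]
        rw [pow_succ (-x), pow_mul (-x), neg_sq]
        ring
    exact key (m + 1)

/-! ### Upper and lower bounds for the best approximation -/

section bounds
variable {a r κ : ℝ} (ha : 0 < a) (h0 : 0 < r) (h1 : r < 1) (hκ : 0 < κ)
  (hκ1 : κ * (1 + r) = 1) (hκa : κ * (1 - r) = a)
include ha h0 h1 hκ hκ1 hκa

/-- The de la Vallée Poussin bound: were the error of `p` smaller, the difference of the odd parts of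
`p` and of the truncated series would alternate in sign too often. -/
lemma lower_bound {p : Polynomial ℝ} {m : ℕ} (hp : p.natDegree ≤ 2 * m + 1) {E : ℝ}
    (hE : ∀ x ∈ X a, |p.eval x - Real.sign x| ≤ E) :
    2 * r ^ (m + 1) * (bb r (m + 1) - (1 + r) * dd r (m + 1)) ≤ E := by
  by_contra! hlt
  obtain ⟨q, hq, hqp⟩ := exists_odd_part hp
  obtain ⟨t, ht, htlt⟩ := exists_alternation h0 h1 (Nat.le_add_left 1 m)
  have hqE : ∀ x ∈ Icc a 1, |1 - x * q.eval (x ^ 2)| ≤ E := by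
    intro x hx
    have hx0 : 0 < x := ha.trans_le hx.1
    have e1 := hE x (Or.inr hx)
    have e2 := hE (-x) (Or.inl ⟨by linarith [hx.2], by linarith [hx.1]⟩)
    rw [Real.sign_of_pos hx0] at e1
    rw [Real.sign_of_neg (by linarith)] at e2
    rw [hqp]
    rw [abs_le] at *
    constructor <;> linarith [e1.1, e1.2, e2.1, e2.2]
  refine no_alternation (D := q - QQ r κ (m + 1)) (n := m + 1)
    (t := fun j => (κ * ww r (t j)) ^ 2) (σ := (-1) ^ (m + 1)) ?_ ?_ ?_
  · exact Nat.lt_succ_of_le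
      ((Polynomial.natDegree_sub_le_of_le hq (QQ_natDegree r κ m)).trans (max_self m).le)
  · intro j hj
    have hcos := Real.strictAntiOn_cos (ht j hj.le).1 (ht (j + 1) hj).1 (htlt j hj)
    simp only [mul_pow, ww_sq h0 h1]
    have : 0 < κ ^ 2 := by positivity
    nlinarith [mul_lt_mul_of_pos_left hcos (mul_pos this h0)]
  · intro j hj
    have hw := ww_pos h0 h1 (t j)
    set x := κ * ww r (t j) with hx
    have hx0 : 0 < x := mul_pos hκ hw
    have hxm : x ∈ Icc a 1 :=
      ⟨hκa.symm.trans_le (mul_le_mul_of_nonneg_left (le_ww h0 _) hκ.le),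
        (mul_le_mul_of_nonneg_left (ww_le h0 h1 _) hκ.le).trans_eq hκ1⟩
    have e1 := hqE x hxm
    have e2 := error_estimate h0 h1 (m + 1) (t j)
    rw [(ht j hj).2] at e2
    have hQ : x * (QQ r κ (m + 1)).eval (x ^ 2) = ww r (t j) * trunc r (m + 1) (t j) := by
      rw [hx, QQ_eval h0 h1 hκ]
      field_simp
    rw [← hQ] at e2
    have hs : ((-1 : ℝ) ^ (m + 1) * (-1) ^ j) = 1 ∨ ((-1 : ℝ) ^ (m + 1) * (-1) ^ j) = -1 := by
      rw [← pow_add]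
      exact neg_one_pow_eq_or ℝ _
    have hmain : 2 * (-r) ^ (m + 1) * bb r (m + 1) * (-1) ^ j
        = ((-1 : ℝ) ^ (m + 1) * (-1) ^ j) * (2 * r ^ (m + 1) * bb r (m + 1)) := by
      rw [neg_pow r]
      ring
    rw [hmain] at e2
    refine pos_of_mul_pos_right (a := x) ?_ hx0.le
    rw [Polynomial.eval_sub]
    have : x * ((-1) ^ (m + 1) * (-1) ^ j * (q.eval (x ^ 2) - (QQ r κ (m + 1)).eval (x ^ 2)))
        = ((-1) ^ (m + 1) * (-1) ^ j) * ((1 - x * (QQ r κ (m + 1)).eval (x ^ 2))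
          - (1 - x * q.eval (x ^ 2))) := by ring
    rw [this]
    rw [abs_le] at e1 e2
    rcases hs with hs | hs <;> rw [hs] at e2 ⊢ <;> nlinarith [e1.1, e1.2, e2.1, e2.2]

/-- The odd polynomial `x * QQ (x ^ 2)` realizes the truncated series, whose error is known from
`error_estimate`. -/
lemma upper_bound (m : ℕ) : ∃ p : Polynomial ℝ, p.natDegree ≤ 2 * m + 1 ∧
    ∀ x ∈ X a, |p.eval x - Real.sign x|
      ≤ 2 * r ^ (m + 1) * (bb r (m + 1) + (1 + r) * dd r (m + 1)) := by
  refine ⟨Polynomial.X * (QQ r κ (m + 1)).comp (Polynomial.X ^ 2), ?_, ?_⟩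
  · refine Polynomial.natDegree_mul_le.trans ?_
    rw [Polynomial.natDegree_X, Polynomial.natDegree_comp, Polynomial.natDegree_X_pow]
    have := QQ_natDegree r κ m
    omega
  · have hpos : ∀ x ∈ Icc a 1, |1 - x * (QQ r κ (m + 1)).eval (x ^ 2)|
        ≤ 2 * r ^ (m + 1) * (bb r (m + 1) + (1 + r) * dd r (m + 1)) := by
      intro x hx
      obtain ⟨θ, rfl⟩ := exists_angle h0 hκ (hκa.trans_le hx.1) (hx.2.trans_eq hκ1.symm)
        (ha.trans_le hx.1) h1
      rw [QQ_eval h0 h1 hκ, show κ * ww r θ * (κ⁻¹ * trunc r (m + 1) θ)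
        = ww r θ * trunc r (m + 1) θ by field_simp]
      have e := error_estimate h0 h1 (m + 1) θ
      have hb := bb_nonneg h0 (m + 1)
      have hmain : |2 * (-r) ^ (m + 1) * bb r (m + 1)
          * Real.cos ((m + 1 : ℕ) * θ - phase r θ)| ≤ 2 * r ^ (m + 1) * bb r (m + 1) := by
        rw [abs_mul, abs_mul, abs_mul, abs_pow, abs_neg, abs_of_pos h0, abs_two, abs_of_nonneg hb]
        exact mul_le_of_le_one_right (by positivity) (Real.abs_cos_le_one _)
      rw [abs_le] at *
      constructor <;> nlinarith [e.1, e.2, hmain.1, hmain.2]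
    intro x hx
    simp only [Polynomial.eval_mul, Polynomial.eval_X, Polynomial.eval_comp, Polynomial.eval_pow]
    rcases hx with hx | hx
    · rw [Real.sign_of_neg (by linarith [hx.2])]
      have := hpos (-x) ⟨by linarith [hx.2], by linarith [hx.1]⟩
      rw [neg_sq] at this
      convert this using 2
      ring
    · rw [Real.sign_of_pos (ha.trans_le hx.1), abs_sub_comm]
      exact hpos x hx

lemma Lm_bounds (m : ℕ) :
    2 * r ^ (m + 1) * (bb r (m + 1) - (1 + r) * dd r (m + 1)) ≤ Lm m a ∧
      Lm m a ≤ 2 * r ^ (m + 1) * (bb r (m + 1) + (1 + r) * dd r (m + 1)) := by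
  have ha1 : a ≤ 1 := by nlinarith
  have hne : (X a).Nonempty := ⟨1, Or.inr ⟨ha1, le_rfl⟩⟩
  have hcomp : IsCompact (X a) := isCompact_Icc.union isCompact_Icc
  have hlow : ∀ p : Polynomial ℝ, p.natDegree ≤ 2 * m + 1 →
      2 * r ^ (m + 1) * (bb r (m + 1) - (1 + r) * dd r (m + 1))
        ≤ sSup ((fun x => |p.eval x - Real.sign x|) '' X a) := by
    intro p hp
    refine lower_bound ha h0 h1 hκ hκ1 hκa hp fun x hx => ?_
    -- `sSup` dominates its members because `p` is bounded on the compact set `X a`.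
    obtain ⟨C, hC⟩ := hcomp.exists_bound_of_continuousOn p.continuous.continuousOn
    have hbdd : BddAbove ((fun x => |p.eval x - Real.sign x|) '' X a) := by
      refine ⟨C + 1, ?_⟩
      rintro _ ⟨y, hy, rfl⟩
      refine (abs_sub _ _).trans (add_le_add (hC y hy) ?_)
      rcases Real.sign_apply_eq y with h | h | h <;> simp [h]
    exact le_csSup hbdd ⟨x, hx, rfl⟩
  obtain ⟨p, hp, hpE⟩ := upper_bound ha h0 h1 hκ hκ1 hκa m
  constructor
  · refine le_csInf ⟨_, p, hp, rfl⟩ ?_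
    rintro _ ⟨q, hq, rfl⟩
    exact hlow q hq
  · unfold Lm
    refine le_trans (csInf_le ?_ ⟨p, hp, rfl⟩) ?_
    · refine ⟨2 * r ^ (m + 1) * (bb r (m + 1) - (1 + r) * dd r (m + 1)), ?_⟩
      rintro _ ⟨q, hq, rfl⟩
      exact hlow q hq
    · refine csSup_le (hne.image _) ?_
      rintro _ ⟨x, hx, rfl⟩
      exact hpE x hx

end bounds

/-- Theorem 1: `lim_{m→∞} √m ((1+a)/(1-a))^m L_m(a) = (1-a)/√(πa)`. -/
theorem zolotarev_poly_asymptotics (a : ℝ) (ha0 : 0 < a) (ha1 : a < 1) :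
    Tendsto (fun m : ℕ => Real.sqrt m * ((1 + a) / (1 - a)) ^ m * Lm m a)
      atTop (nhds ((1 - a) / Real.sqrt (Real.pi * a))) := by
  have hs1 : 0 < 1 - a := by linarith
  have hs2 : 0 < 1 + a := by linarith
  set r : ℝ := (1 - a) / (1 + a) with hr
  have h0 : 0 < r := div_pos hs1 hs2
  have h1 : r < 1 := by
    rw [hr, div_lt_one hs2]
    linarith
  have hκ : 0 < (1 + a) / 2 := by positivity
  have hκ1 : (1 + a) / 2 * (1 + r) = 1 := by
    rw [hr]
    field_simp
    ring
  have hκa : (1 + a) / 2 * (1 - r) = a := by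
    rw [hr]
    field_simp
    ring
  have hinv : (1 + a) / (1 - a) = r⁻¹ := by rw [hr, inv_div]
  have hb := tendsto_sqrt_shift (tendsto_sqrt_bb h0 h1) 1
  have hd := (tendsto_sqrt_shift (tendsto_sqrt_dd h0 h1) 1).const_mul (1 + r)
  rw [mul_zero] at hd
  have hval : 2 * r * (1 / Real.sqrt Real.pi * (Real.sqrt (1 - r ^ 2))⁻¹)
      = (1 - a) / Real.sqrt (Real.pi * a) := by
    have e : 1 - r ^ 2 = (2 / (1 + a)) ^ 2 * a := by
      rw [hr]
      field_simp
      ring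
    rw [e, Real.sqrt_mul (by positivity), Real.sqrt_sq (by positivity),
      Real.sqrt_mul Real.pi_pos.le, hr]
    field_simp
  have hlow := (hb.sub hd).const_mul (2 * r)
  have hupp := (hb.add hd).const_mul (2 * r)
  rw [sub_zero, hval] at hlow
  rw [add_zero, hval] at hupp
  have hpow : ∀ m : ℕ, r⁻¹ ^ m * r ^ (m + 1) = r := fun m => by
    rw [pow_succ, ← mul_assoc, ← mul_pow, inv_mul_cancel₀ h0.ne', one_pow, one_mul]
  refine tendsto_of_tendsto_of_tendsto_of_le_of_le hlow hupp (fun m => ?_) fun m => ?_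
  · have h := mul_le_mul_of_nonneg_left (Lm_bounds ha0 h0 h1 hκ hκ1 hκa m).1
      (by positivity : 0 ≤ Real.sqrt m * r⁻¹ ^ m)
    rw [hinv]
    refine le_trans (le_of_eq ?_) h
    linear_combination (-(2 * Real.sqrt m * (bb r (m + 1) - (1 + r) * dd r (m + 1)))) * hpow m
  · have h := mul_le_mul_of_nonneg_left (Lm_bounds ha0 h0 h1 hκ hκ1 hκa m).2
      (by positivity : 0 ≤ Real.sqrt m * r⁻¹ ^ m)
    rw [hinv]
    refine h.trans (le_of_eq ?_)
    linear_combination (2 * Real.sqrt m * (bb r (m + 1) + (1 + r) * dd r (m + 1))) * hpow m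
end

section
/- Let m be a natural number, B > 0, and 0 < a < 1, and suppose φ is a continuous map from the closure of Q to the closure of Ω_{B,m} which restricts to a holomorphic bijection from Q onto Ω_{B,m}, satisfies |φ(z)| → ∞ as |z| → ∞ in Q, and satisfies φ(0) = iB, φ(a) = 0, and φ(1) = π(m+1). Then L_m(a) = 1/cosh(B). -/
/-!
The extremal polynomial is `p(x) = x T(x²)` with `1 - x T(x²) = L cos φ(x)`, `L = 1 / cosh B`.

*The conformal map produces a polynomial.* Put `Φ(w) = φ(√w)` on the closed upper half-plane and
`V(w) = √w (1 - L cos Φ(w))`. Since `φ` is a homeomorphism of the interiors, `Φ` sends the real line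
into the boundary of `Ω_{B,m}` (`boundary_notMem`), and a real coordinate of the image point runs
monotonically along that boundary (`bdCoord_monotone`). The monotonicity is local: on each open
edge (the curved one being straightened by `cos`) the map extends by Schwarz reflection, and a
function that is real on the line and has nonnegative imaginary part above it has nonnegative
derivative on the line (`monotoneOn_boundary`). The normalisation at `0`, `a`, `1` then
shows that `Φ` maps `(-∞, 0]` to the curve `Re cos = cosh B`, maps `[0, ∞)` into `Im cos = 0`, and
maps `[a², 1]` onto the real segment `[0, π(m+1)]`. So `V` is real on the real line: for `t < 0` the
factor `√t` is imaginary, and so is `1 - L cos Φ(t)`. Hence `V` extends to an entire function.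

*Its degree.* The function `W = exp(-iΦ/(m+1))` maps the upper half-plane to the lower one, so
`|W(w)| Im w` is at most of order `|w|²` by the Borel-Carathéodory theorem (`halfPlane_growth`),
while `|cos Φ| ≤ |W|^(m+1)`. The maximum principle removes the blow-up at the real axis
(`growth_of_offReal`) and leaves `V(w) = O(|w|^(m + 3/2))`. By Cauchy's estimates
`V(w) = w T(w)` with `T` a real polynomial of degree at most `m` (`entire_polynomial`).

*Alternation.* On `[a, 1]` the error `x T(x²) - 1 = -L cos φ(x)` has modulus at most `L` and takes
the values `-(-1)^k L` at the points where `φ = kπ`, `0 ≤ k ≤ m + 1`. A strictly better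
polynomial would differ from `x T(x²)` by a polynomial of degree at most `2m + 1` with `2m + 2`
zeros, so `L_m(a) = L` (`Lm_eq_of_alternation`).
-/

open Filter Set

/-- The open first quadrant. -/
def Q : Set ℂ := {z | 0 < z.re ∧ 0 < z.im}

/-- The boundary function of the regions `Ω_B` and `Ω_{B,m}`. -/
noncomputable def gB (B y : ℝ) : ℝ :=
  if y ≤ B then 0 else Real.arccos (Real.cosh B / Real.cosh y)

/-- The region `Ω_{B,m}`. -/
noncomputable def ΩBm (B : ℝ) (m : ℕ) : Set ℂ :=
  {z | 0 < z.im ∧ gB B z.im < z.re ∧ z.re < Real.pi * (m + 1)}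

/-! ### Reflection and growth in the half-plane -/

open Complex in
/-- Painlevé's theorem for the real axis: a continuous function that is holomorphic off the real
axis is holomorphic. By Morera's theorem it suffices to integrate over rectangles, and a rectangle
that crosses the axis is cut along it. -/
lemma differentiableOn_of_off_real {U : Set ℂ} (hU : IsOpen U) {f : ℂ → ℂ}
    (hc : ContinuousOn f U) (hd : ∀ z ∈ U, z.im ≠ 0 → DifferentiableAt ℂ f z) :
    DifferentiableOn ℂ f U := by
  refine (isConservativeOn_and_continuousOn_iff_isDifferentiableOn hU).1 ⟨?_, hc⟩
  intro z w hzw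
  rw [← add_eq_zero_iff_eq_neg, wedgeIntegral_add_wedgeIntegral_eq]
  have key : ∀ z w : ℂ, Rectangle z w ⊆ U → (0 : ℝ) ∉ Ioo (min z.im w.im) (max z.im w.im) →
      (∫ x : ℝ in z.re..w.re, f (x + z.im * I)) - (∫ x : ℝ in z.re..w.re, f (x + w.im * I)) +
      I • (∫ y : ℝ in z.im..w.im, f (re w + y * I)) -
      I • (∫ y : ℝ in z.im..w.im, f (re z + y * I)) = 0 := by
    intro z w hzw h0
    refine integral_boundary_rect_eq_zero_of_continuousOn_of_differentiableOn f z w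
      (hc.mono hzw) ?_
    intro p hp
    refine (hd p (hzw ?_) ?_).differentiableWithinAt
    · rw [Rectangle]
      exact ⟨Ioo_subset_Icc_self hp.1, Ioo_subset_Icc_self hp.2⟩
    · intro h
      exact h0 (h ▸ hp.2)
  by_cases h0 : (0 : ℝ) ∈ Ioo (min z.im w.im) (max z.im w.im)
  swap
  · exact key z w hzw h0
  have h0' : (0 : ℝ) ∈ uIcc z.im w.im := Ioo_subset_Icc_self h0
  have h1 := key z (w.re : ℂ) (by
    refine Subset.trans ?_ hzw
    intro p hp
    simp only [Rectangle, mem_reProdIm, ofReal_re, ofReal_im] at hp ⊢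
    exact ⟨hp.1, uIcc_subset_uIcc left_mem_uIcc h0' hp.2⟩) (by
      simp only [ofReal_im]
      rintro ⟨h1, h2⟩
      rcases le_total z.im 0 with h | h
      · simp [h] at h2
      · simp [h] at h1)
  have h2 := key (z.re : ℂ) w (by
    refine Subset.trans ?_ hzw
    intro p hp
    simp only [Rectangle, mem_reProdIm, ofReal_re, ofReal_im] at hp ⊢
    exact ⟨hp.1, uIcc_subset_uIcc h0' right_mem_uIcc hp.2⟩) (by
      simp only [ofReal_im]
      rintro ⟨h1, h2⟩
      rcases le_total w.im 0 with h | h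
      · simp [h] at h2
      · simp [h] at h1)
  have vert : ∀ a : ℝ, a ∈ uIcc z.re w.re → ∀ b₁ ∈ uIcc z.im w.im, ∀ b₂ ∈ uIcc z.im w.im,
      IntervalIntegrable (fun y : ℝ => f (a + y * I)) MeasureTheory.volume b₁ b₂ := by
    intro a ha b₁ hb₁ b₂ hb₂
    refine (hc.comp (t := U) (s := uIcc b₁ b₂) (by fun_prop) ?_).intervalIntegrable
    intro y hy
    refine hzw ?_
    simp only [Rectangle, mem_reProdIm]
    exact ⟨by simpa using ha, by simpa using uIcc_subset_uIcc hb₁ hb₂ hy⟩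
  have e1 := intervalIntegral.integral_add_adjacent_intervals
    (vert w.re right_mem_uIcc z.im left_mem_uIcc 0 h0')
    (vert w.re right_mem_uIcc 0 h0' w.im right_mem_uIcc)
  have e2 := intervalIntegral.integral_add_adjacent_intervals
    (vert z.re left_mem_uIcc z.im left_mem_uIcc 0 h0')
    (vert z.re left_mem_uIcc 0 h0' w.im right_mem_uIcc)
  rw [← e1, ← e2]
  simp only [ofReal_re, ofReal_im] at h1 h2
  simp only [smul_add]
  linear_combination h1 + h2

/-- The extension of `F` from the closed upper half-plane to the plane by `F(conj z) = conj F(z)`. The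
values of `F` below the real axis are discarded. -/
noncomputable def schwarzRefl (F : ℂ → ℂ) (z : ℂ) : ℂ :=
  if 0 ≤ z.im then F z else (starRingEnd ℂ) (F ((starRingEnd ℂ) z))

/-- The Schwarz reflection principle across the real axis. -/
lemma schwarzRefl_differentiableOn {U : Set ℂ} (hU : IsOpen U)
    (hconj : ∀ z ∈ U, (starRingEnd ℂ) z ∈ U) {F : ℂ → ℂ}
    (hc : ContinuousOn F (U ∩ {z | 0 ≤ z.im}))
    (hd : ∀ z ∈ U, 0 < z.im → DifferentiableAt ℂ F z)
    (hr : ∀ x : ℝ, (x : ℂ) ∈ U → (F x).im = 0) :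
    DifferentiableOn ℂ (schwarzRefl F) U := by
  apply differentiableOn_of_off_real hU
  · have h1 : ContinuousOn (schwarzRefl F) (U ∩ {z | 0 ≤ z.im}) :=
      hc.congr fun z hz => if_pos hz.2
    have h2 : ContinuousOn (schwarzRefl F) (U ∩ {z | z.im ≤ 0}) := by
      have : ContinuousOn (fun z => (starRingEnd ℂ) (F ((starRingEnd ℂ) z)))
          (U ∩ {z | z.im ≤ 0}) := by
        refine Complex.continuous_conj.comp_continuousOn
          (hc.comp Complex.continuous_conj.continuousOn ?_)
        intro z hz
        exact ⟨hconj z hz.1, by simpa using hz.2⟩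
      refine this.congr fun z hz => ?_
      unfold schwarzRefl
      split_ifs with h
      · have hz0 : z.im = 0 := le_antisymm hz.2 h
        have hz1 : (z.re : ℂ) = z := Complex.ext (by simp) (by simp [hz0])
        have hz2 := hr z.re (by rw [hz1]; exact hz.1)
        rw [← hz1]
        simp only [Complex.conj_ofReal]
        exact (Complex.conj_eq_iff_im.2 hz2).symm
      · rfl
    intro z hz
    have h3 : ContinuousOn (schwarzRefl F) U := by
      have e : U = (U ∩ {z | 0 ≤ z.im}) ∪ (U ∩ {z | z.im ≤ 0}) := by
        ext z
        simp only [mem_union, mem_inter_iff, mem_ofPred_eq]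
        have := le_total 0 z.im
        tauto
      intro z hz
      rw [e]
      refine ContinuousWithinAt.union ?_ ?_
      · by_cases h : 0 ≤ z.im
        · exact h1 z ⟨hz, h⟩
        · refine continuousWithinAt_of_notMem_closure fun hcl => h ?_
          exact (closure_minimal inter_subset_right
            (isClosed_le continuous_const Complex.continuous_im)) hcl
      · by_cases h : z.im ≤ 0
        · exact h2 z ⟨hz, h⟩
        · refine continuousWithinAt_of_notMem_closure fun hcl => h ?_
          exact (closure_minimal inter_subset_right
            (isClosed_le Complex.continuous_im continuous_const)) hcl
    exact h3 z hz
  · intro z hz hz0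
    rcases lt_or_gt_of_ne hz0 with h | h
    · have hd' := (hd _ (hconj z hz) (by simpa using h)).conj_conj
      simp only [Complex.conj_conj] at hd'
      refine hd'.congr_of_eventuallyEq ?_
      filter_upwards [(isOpen_lt Complex.continuous_im continuous_const).mem_nhds h] with w hw
      have hw : w.im < 0 := hw
      simp [schwarzRefl, not_le.2 hw]
    · refine (hd z hz h).congr_of_eventuallyEq ?_
      filter_upwards [(isOpen_lt continuous_const Complex.continuous_im).mem_nhds h] with w hw
      have hw : 0 < w.im := hw
      simp [schwarzRefl, hw.le]

/-- If `F` is real on the real axis and has nonnegative imaginary part above it, then `F` is monotone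
along the axis: the derivative of the reflected function at `x` is the derivative of
`s ↦ Im F(x + is)` at `0⁺`. -/
lemma monotoneOn_boundary {F : ℂ → ℂ} {t δ : ℝ}
    (hc : ContinuousOn F (Metric.ball (t : ℂ) δ ∩ {z | 0 ≤ z.im}))
    (hd : ∀ z ∈ Metric.ball (t : ℂ) δ, 0 < z.im → DifferentiableAt ℂ F z)
    (hr : ∀ x : ℝ, (x : ℂ) ∈ Metric.ball (t : ℂ) δ → (F x).im = 0)
    (hp : ∀ z ∈ Metric.ball (t : ℂ) δ, 0 < z.im → 0 ≤ (F z).im) :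
    MonotoneOn (fun s : ℝ => (F s).re) (Ioo (t - δ) (t + δ)) := by
  have hmem : ∀ x : ℝ, x ∈ Ioo (t - δ) (t + δ) → (x : ℂ) ∈ Metric.ball (t : ℂ) δ := by
    intro x hx
    rw [Metric.mem_ball, Complex.dist_eq, ← Complex.ofReal_sub, Complex.norm_real,
      Real.norm_eq_abs, abs_lt]
    constructor <;> linarith [hx.1, hx.2]
  have hG := schwarzRefl_differentiableOn Metric.isOpen_ball (fun z hz => by
    rw [Metric.mem_ball, Complex.dist_eq] at hz ⊢
    rw [← Complex.conj_ofReal t, ← map_sub, RCLike.norm_conj]; exact hz) hc hd hr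
  set G := schwarzRefl F with hGdef
  have hGx : ∀ x : ℝ, G x = F x := fun x => by simp [hGdef, schwarzRefl]
  have hder : ∀ x ∈ Ioo (t - δ) (t + δ), HasDerivAt (fun s : ℝ => (F s).re)
      (deriv G x).re x := by
    intro x hx
    have h := (hG.differentiableAt (Metric.isOpen_ball.mem_nhds (hmem x hx))).hasDerivAt
    have := h.real_of_complex
    simpa only [hGx] using this
  refine monotoneOn_of_deriv_nonneg (convex_Ioo _ _)
    (fun x hx => (hder x hx).continuousAt.continuousWithinAt)
    (fun x hx => ((hder x (by simpa using hx)).differentiableAt.differentiableWithinAt)) ?_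
  intro x hx
  rw [interior_Ioo] at hx
  rw [(hder x hx).deriv]
  -- the derivative of `s ↦ Im G (x + s I)` at `0` is `Re (G' x)`; this function is `≥ 0` for `s ≥ 0`
  have h := (hG.differentiableAt (Metric.isOpen_ball.mem_nhds (hmem x hx))).hasDerivAt
  have h1 : HasDerivAt (fun s : ℂ => (-Complex.I) * G (x + s * Complex.I)) (deriv G x)
      ((0 : ℝ) : ℂ) := by
    have hi : HasDerivAt (fun s : ℂ => (x : ℂ) + s * Complex.I) Complex.I ((0 : ℝ) : ℂ) := by
      simpa using ((hasDerivAt_id ((0 : ℝ) : ℂ)).mul_const Complex.I).const_add (x : ℂ)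
    have h' : HasDerivAt G (deriv G x) ((x : ℂ) + ((0 : ℝ) : ℂ) * Complex.I) := by simpa using h
    have := (HasDerivAt.comp (h₂ := G) ((0 : ℝ) : ℂ) h' hi).const_mul (-Complex.I)
    refine this.congr_deriv ?_
    linear_combination (-deriv G x) * Complex.I_mul_I
  have h2 := h1.real_of_complex
  have h3 := h2.hasDerivWithinAt (s := Ioi 0)
  rw [hasDerivWithinAt_iff_tendsto_slope' (by simp)] at h3
  refine ge_of_tendsto h3 ?_
  have hcont : Tendsto (fun s : ℝ => (x : ℂ) + s * Complex.I) (nhdsWithin 0 (Ioi 0))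
      (nhds (x : ℂ)) := by
    have : Continuous (fun s : ℝ => (x : ℂ) + s * Complex.I) := by fun_prop
    have := this.tendsto 0
    simp only [Complex.ofReal_zero, zero_mul, add_zero] at this
    exact this.mono_left nhdsWithin_le_nhds
  filter_upwards [hcont.eventually (Metric.isOpen_ball.mem_nhds (hmem x hx)),
    self_mem_nhdsWithin] with s hs hs0
  have hs0 : 0 < s := hs0
  have hp' := hp _ hs (by simpa using hs0)
  have hr' := hr x (hmem x hx)
  have e1 : G (x + s * Complex.I) = F (x + s * Complex.I) := by
    simp [hGdef, schwarzRefl, hs0.le]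
  rw [slope_def_field]
  simp only [e1, hGx, Complex.ofReal_zero, zero_mul, add_zero, sub_zero]
  refine div_nonneg ?_ hs0.le
  simp [hr', hp']

/-- A holomorphic map of the upper into the lower half-plane satisfies `|W(z)| Im z = O(|z + i|²)`.
This is the Borel-Carathéodory theorem transported from the unit disc by the Cayley transform. -/
lemma halfPlane_growth {W : ℂ → ℂ} (hd : DifferentiableOn ℂ W {z | 0 < z.im})
    (hneg : ∀ z : ℂ, 0 < z.im → (W z).im < 0) :
    ∃ C : ℝ, 0 < C ∧ ∀ z : ℂ, 0 < z.im → ‖W z‖ * z.im ≤ C * ‖z + Complex.I‖ ^ 2 := by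
  have hWI : W Complex.I ≠ 0 := fun h => by simpa [h] using hneg Complex.I (by simp)
  have hM : 0 < ‖W Complex.I‖ := norm_pos_iff.2 hWI
  refine ⟨2 * ‖W Complex.I‖, by positivity, fun z hz => ?_⟩
  set c : ℂ → ℂ := fun u => Complex.I * (1 + u) / (1 - u) with hcdef
  have hne : ∀ u ∈ Metric.ball (0 : ℂ) 1, 1 - u ≠ 0 := by
    intro u hu h
    have : u = 1 := by linear_combination -h
    simp [this] at hu
  have hcim : ∀ u ∈ Metric.ball (0 : ℂ) 1, 0 < (c u).im := by
    intro u hu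
    have h1 : (c u).im = (1 - ‖u‖ ^ 2) / Complex.normSq (1 - u) := by
      rw [hcdef]
      simp only [Complex.div_im, Complex.sq_norm, Complex.normSq_apply, Complex.mul_im,
        Complex.mul_re, Complex.I_re, Complex.I_im, Complex.add_re, Complex.add_im,
        Complex.sub_re, Complex.sub_im, Complex.one_re, Complex.one_im]
      ring
    rw [h1]
    have h2 : ‖u‖ < 1 := by simpa using hu
    have h3 := Complex.normSq_pos.2 (hne u hu)
    have : 0 < 1 - ‖u‖ ^ 2 := by nlinarith [norm_nonneg u]
    positivity
  have hzI : z + Complex.I ≠ 0 := by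
    intro h
    have := congrArg Complex.im h
    simp at this
    linarith
  have hN : 0 < ‖z + Complex.I‖ := norm_pos_iff.2 hzI
  -- the point of the disc that `c` maps to `z`
  set u := (z - Complex.I) / (z + Complex.I) with hu
  have hsq : ‖z + Complex.I‖ ^ 2 - ‖z - Complex.I‖ ^ 2 = 4 * z.im := by
    simp only [Complex.sq_norm, Complex.normSq_apply, Complex.add_re, Complex.add_im,
      Complex.sub_re, Complex.sub_im, Complex.I_re, Complex.I_im]
    ring
  have hnu : ‖u‖ = ‖z - Complex.I‖ / ‖z + Complex.I‖ := norm_div _ _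
  have hlt : ‖z - Complex.I‖ < ‖z + Complex.I‖ := by
    nlinarith [norm_nonneg (z - Complex.I)]
  have hub : u ∈ Metric.ball (0 : ℂ) 1 := by
    rw [mem_ball_zero_iff, hnu, div_lt_one hN]; exact hlt
  have hcu : c u = z := by
    have h1 := hne u hub
    rw [hcdef]
    simp only
    rw [div_eq_iff h1, hu]
    field_simp
    ring
  -- the Borel-Carathéodory estimate needs a function with real part bounded above
  have hbc := Complex.borelCaratheodory (f := fun u => -Complex.I * W (c u)) (R := 1)
    (M := ‖W Complex.I‖) (z := u) hM (by
      refine DifferentiableOn.const_mul (hd.comp ?_ fun u hu => hcim u hu) _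
      intro v hv
      have := hne v hv
      refine DifferentiableAt.differentiableWithinAt ?_
      rw [hcdef]
      fun_prop (disch := exact this)) (by
      intro v hv
      have := hneg _ (hcim v hv)
      simp only [mem_ofPred_eq, neg_mul, Complex.neg_re, Complex.mul_re, Complex.I_re,
        Complex.I_im]
      linarith) one_pos hub
  have hc0 : c 0 = Complex.I := by simp [hcdef]
  simp only [hcu, hc0, norm_mul, norm_neg, Complex.norm_I, one_mul] at hbc
  set M := ‖W Complex.I‖
  have hu1 : ‖u‖ < 1 := by simpa using hub
  have h4 : ‖W z‖ * (1 - ‖u‖) ≤ 4 * M := by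
    have : 2 * M * ‖u‖ / (1 - ‖u‖) + M * (1 + ‖u‖) / (1 - ‖u‖) ≤ 4 * M / (1 - ‖u‖) := by
      rw [← add_div]
      refine div_le_div_of_nonneg_right ?_ (by linarith)
      nlinarith
    rw [← le_div_iff₀ (by linarith)]
    exact hbc.trans this
  have h5 : ‖z - Complex.I‖ = ‖u‖ * ‖z + Complex.I‖ := by rw [hnu]; field_simp
  rw [h5] at hsq
  have h6 : 4 * z.im = ‖z + Complex.I‖ ^ 2 * (1 - ‖u‖) * (1 + ‖u‖) := by rw [← hsq]; ring
  have h7 : 4 * (‖W z‖ * z.im) = (‖W z‖ * (1 - ‖u‖)) * (‖z + Complex.I‖ ^ 2 * (1 + ‖u‖)) := by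
    linear_combination ‖W z‖ * h6
  have h8 : (‖W z‖ * (1 - ‖u‖)) * (‖z + Complex.I‖ ^ 2 * (1 + ‖u‖)) ≤
      (4 * M) * (‖z + Complex.I‖ ^ 2 * 2) := by
    refine mul_le_mul h4 ?_ (by positivity) (by positivity)
    exact mul_le_mul_of_nonneg_left (by linarith) (by positivity)
  linarith

/-- An entire function that is real on the real axis, vanishes at `0` and is `O(|w|^(m + 3/2))` has
the form `w T(w)` with `T` a real polynomial of degree at most `m`. -/
lemma entire_polynomial {V : ℂ → ℂ} (hV : Differentiable ℂ V) (hV0 : V 0 = 0)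
    (m : ℕ) {K : ℝ}
    (hr : ∀ x : ℝ, (V x).im = 0)
    (hK : ∀ r : ℝ, 1 ≤ r → ∀ w : ℂ, ‖w‖ ≤ r / 2 → ‖V w‖ ≤ K * r ^ (m + 1) * √r) :
    ∃ T : Polynomial ℝ, T.natDegree ≤ m ∧ ∀ x : ℝ, V x = ((x * T.eval x : ℝ) : ℂ) := by
  -- Cauchy's estimate on `|w| = r / 2`, as `r → ∞`
  have hzero : ∀ n, m + 2 ≤ n → iteratedDeriv n V 0 = 0 := by
    intro n hn
    obtain ⟨k, rfl⟩ := Nat.exists_eq_add_of_le hn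
    set n := m + 2 + k
    have hb : ∀ r : ℝ, 1 ≤ r → ‖iteratedDeriv n V 0‖ ≤ (n.factorial * K * 2 ^ n) * (√r)⁻¹ := by
      intro r hr1
      have hr0 : 0 < r := by linarith
      have h := Complex.norm_iteratedDeriv_le_of_forall_mem_sphere_norm_le (c := 0) (R := r / 2) n
        (by linarith) hV.diffContOnCl (C := K * r ^ (m + 1) * √r) (fun z hz => hK r hr1 z (by
          simp at hz; exact hz.le))
      have hK0 : 0 ≤ K := by
        have h := (norm_nonneg _).trans (hK 1 le_rfl 0 (by simp))
        simpa using h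
      refine h.trans ?_
      rw [div_pow, div_div_eq_mul_div, div_le_iff₀ (by positivity)]
      have hs : √r * √r = r := Real.mul_self_sqrt hr0.le
      have hs0 : 0 < √r := Real.sqrt_pos.2 hr0
      have h1 : r ^ (m + 2) ≤ r ^ n := pow_le_pow_right₀ hr1 (by omega)
      calc (n.factorial : ℝ) * (K * r ^ (m + 1) * √r) * 2 ^ n
          = (n.factorial * K * 2 ^ n) * (√r)⁻¹ * (r ^ (m + 1) * (√r * √r)) := by
            field_simp
        _ = (n.factorial * K * 2 ^ n) * (√r)⁻¹ * r ^ (m + 2) := by rw [hs, ← pow_succ]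
        _ ≤ _ := mul_le_mul_of_nonneg_left h1 (by positivity)
    have ht : Tendsto (fun r : ℝ => (n.factorial * K * 2 ^ n) * (√r)⁻¹) atTop (nhds 0) := by
      have := (tendsto_inv_atTop_zero.comp Real.tendsto_sqrt_atTop).const_mul
        ((n.factorial : ℝ) * K * 2 ^ n)
      simpa using this
    have := ge_of_tendsto ht ((eventually_ge_atTop 1).mono hb)
    exact norm_le_zero_iff.1 this
  set b : ℕ → ℝ := fun n => ((n.factorial : ℂ)⁻¹ * iteratedDeriv n V 0).re with hb
  refine ⟨∑ n ∈ Finset.range (m + 1), Polynomial.monomial n (b (n + 1)), ?_, ?_⟩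
  · refine Polynomial.natDegree_sum_le_of_forall_le _ _ fun n hn => ?_
    refine (Polynomial.natDegree_monomial_le _).trans ?_
    simp at hn; omega
  · intro x
    have h1 := (Complex.hasSum_taylorSeries_of_entire hV 0 (x : ℂ)).unique
      (hasSum_sum_of_ne_finset_zero (s := Finset.range (m + 2)) (fun n hn => by
        rw [hzero n (by simpa using hn)]; simp))
    have h2 : V x = ((V x).re : ℂ) := Complex.ext (by simp) (by simp [hr x])
    rw [h2, Complex.ofReal_inj, h1, Complex.re_sum, Finset.sum_range_succ']
    simp only [Polynomial.eval_finsetSum, Polynomial.eval_monomial, Finset.mul_sum]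
    have e0 : iteratedDeriv 0 V 0 = 0 := by simp [hV0]
    rw [e0]
    simp only [smul_zero, Complex.zero_re, add_zero]
    refine Finset.sum_congr rfl fun n _ => ?_
    have : ((Nat.factorial (n + 1) : ℂ))⁻¹ • ((x : ℂ) - 0) ^ (n + 1) • iteratedDeriv (n + 1) V 0
        = ((x ^ (n + 1) : ℝ) : ℂ) *
          (((Nat.factorial (n + 1) : ℂ))⁻¹ * iteratedDeriv (n + 1) V 0) := by
      simp only [smul_eq_mul, sub_zero]; push_cast; ring
    rw [this, Complex.re_ofReal_mul, hb]
    ring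

/-! ### Alternation -/

lemma exists_zero_of_mul_neg {f : ℝ → ℝ} (hf : Continuous f) {u v : ℝ} (huv : u < v)
    (h : f u * f v < 0) : ∃ z ∈ Ioo u v, f z = 0 := by
  rcases mul_neg_iff.1 h with ⟨h1, h2⟩ | ⟨h1, h2⟩
  · exact intermediate_value_Ioo' huv.le hf.continuousOn ⟨h2, h1⟩
  · exact intermediate_value_Ioo huv.le hf.continuousOn ⟨h1, h2⟩

lemma mul_neg_of_alternating {u v s L : ℝ} (hs : s ^ 2 = 1) (hu : |u + s * L| < L)
    (hv : |v - s * L| < L) : u * v < 0 := by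
  rcases (show s = 1 ∨ s = -1 by simpa using hs) with rfl | rfl
  · rw [abs_lt] at hu hv
    nlinarith
  · rw [abs_lt] at hu hv
    nlinarith

/-- Chebyshev alternation for the odd polynomial `P(x) = x T(x²)`: if its error on `[a, 1]` is at most
`L` and equals `±L` with alternating signs at `m + 2` points, then `P` is a best approximation of
`sgn` on `X(a)`. A strictly better `q` would make `P - q` vanish `m + 1` times on each of `[a, 1]` and
`[-1, -a]`. -/
lemma Lm_eq_of_alternation (m : ℕ) {a L : ℝ} (ha0 : 0 < a) (ha1 : a < 1)
    (T : Polynomial ℝ) (hT : T.natDegree ≤ m)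
    (hub : ∀ x ∈ Icc a 1, |x * T.eval (x ^ 2) - 1| ≤ L)
    (x : ℕ → ℝ) (hx : ∀ k ≤ m + 1, x k ∈ Icc a 1)
    (hlt : ∀ i j, i < j → j ≤ m + 1 → x i < x j)
    (hval : ∀ k ≤ m + 1, x k * T.eval (x k ^ 2) - 1 = -((-1) ^ k * L)) :
    Lm m a = L := by
  set P : Polynomial ℝ := Polynomial.X * T.comp (Polynomial.X ^ 2) with hP
  have hPe : ∀ x, P.eval x = x * T.eval (x ^ 2) := fun x => by simp [hP]
  have hPdeg : P.natDegree ≤ 2 * m + 1 := by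
    refine Polynomial.natDegree_mul_le.trans ?_
    have := Polynomial.natDegree_comp_le (p := T) (q := Polynomial.X ^ 2)
    simp only [Polynomial.natDegree_X, Polynomial.natDegree_X_pow] at this ⊢
    omega
  have hXne : (X a).Nonempty := ⟨a, Or.inr ⟨le_rfl, ha1.le⟩⟩
  have hsgn1 : ∀ y ∈ Icc a 1, Real.sign y = 1 := fun y hy =>
    Real.sign_of_pos (ha0.trans_le hy.1)
  have hsgn2 : ∀ y ∈ Icc a 1, Real.sign (-y) = -1 := fun y hy =>
    Real.sign_of_neg (by linarith [hy.1])
  have hupper : sSup ((fun x => |P.eval x - Real.sign x|) '' X a) ≤ L := by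
    refine csSup_le (hXne.image _) ?_
    rintro _ ⟨y, hy | hy, rfl⟩
    · have hy' : -y ∈ Icc a 1 := ⟨by linarith [hy.2], by linarith [hy.1]⟩
      have h1 := hub _ hy'
      have h2 := hsgn2 _ hy'
      rw [neg_neg] at h2
      simp only [h2, hPe]
      have e : P.eval y - -1 = -(-y * T.eval ((-y) ^ 2) - 1) := by rw [hPe, neg_sq]; ring
      rw [← hPe, e, abs_neg]
      exact h1
    · simp only [hsgn1 y hy, hPe]
      exact hub y hy
  have hlower : ∀ q : Polynomial ℝ, q.natDegree ≤ 2 * m + 1 →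
      L ≤ sSup ((fun x => |q.eval x - Real.sign x|) '' X a) := by
    intro q hq
    by_contra! hcon
    have hbdd : BddAbove ((fun x => |q.eval x - Real.sign x|) '' X a) := by
      obtain ⟨C, hC⟩ := (isCompact_Icc (a := (-1 : ℝ)) (b := 1)).bddAbove_image
        (f := fun x => |q.eval x|) (by fun_prop)
      refine ⟨C + 1, ?_⟩
      rintro _ ⟨y, hy, rfl⟩
      have hy' : y ∈ Icc (-1 : ℝ) 1 := by
        rcases hy with hy | hy
        · exact ⟨hy.1, by linarith [hy.2]⟩
        · exact ⟨by linarith [hy.1], hy.2⟩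
      have h1 : |q.eval y| ≤ C := hC ⟨y, hy', rfl⟩
      have h2 : |Real.sign y| ≤ 1 := by
        rcases Real.sign_apply_eq y with h | h | h <;> simp [h]
      exact (abs_sub _ _).trans (add_le_add h1 h2)
    have herr : ∀ y ∈ X a, |q.eval y - Real.sign y| < L := fun y hy =>
      (le_csSup hbdd ⟨y, hy, rfl⟩).trans_lt hcon
    set D := P - q with hD
    -- at `± x k` the error of `P` is extremal, so `D = P - q` has the sign of that error
    have hpos : ∀ k ≤ m + 1, |D.eval (x k) + (-1) ^ k * L| < L := by
      intro k hk
      have h1 := herr (x k) (Or.inr (hx k hk))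
      rw [hsgn1 _ (hx k hk), ← abs_neg] at h1
      have h2 := hval k hk
      convert h1 using 2
      simp only [hD, Polynomial.eval_sub, hPe]
      linear_combination h2
    have hneg : ∀ k ≤ m + 1, |D.eval (-x k) - (-1) ^ k * L| < L := by
      intro k hk
      have h0 := hx k hk
      have h1 := herr (-x k) (Or.inl ⟨by linarith [h0.2], by linarith [h0.1]⟩)
      rw [hsgn2 _ (hx k hk), ← abs_neg] at h1
      have h2 := hval k hk
      convert h1 using 2
      simp only [hD, Polynomial.eval_sub, hPe, neg_sq]
      linear_combination -h2
    have hz : ∀ k : Fin (m + 1), ∃ z ∈ Ioo (x k) (x (k + 1)), D.eval z = 0 := by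
      intro k
      refine exists_zero_of_mul_neg (f := fun z => D.eval z) (by fun_prop)
        (hlt _ _ (Nat.lt_succ_self _) (by omega)) ?_
      refine mul_neg_of_alternating (s := (-1) ^ (k : ℕ)) (L := L) (by simp [← pow_mul])
        (hpos k (by omega)) ?_
      have := hpos (k + 1) (by omega)
      rw [pow_succ] at this
      convert this using 2
      ring
    have hy : ∀ k : Fin (m + 1), ∃ z ∈ Ioo (-x (k + 1)) (-x k), D.eval z = 0 := by
      intro k
      refine exists_zero_of_mul_neg (f := fun z => D.eval z) (by fun_prop)
        (neg_lt_neg (hlt _ _ (Nat.lt_succ_self _) (by omega))) ?_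
      refine mul_neg_of_alternating (s := (-1) ^ (k : ℕ)) (L := L) (by simp [← pow_mul])
        ?_ (hneg k (by omega))
      have := hneg (k + 1) (by omega)
      rw [pow_succ] at this
      convert this using 2
      ring
    choose z hz1 hz2 using hz
    choose y hy1 hy2 using hy
    have hle : ∀ i j : ℕ, i ≤ j → j ≤ m + 1 → x i ≤ x j := by
      intro i j hij hj
      rcases hij.eq_or_lt with rfl | h
      · exact le_rfl
      · exact (hlt i j h hj).le
    have hzinj : StrictMono z := by
      intro i j hij
      have h1 := hle (i + 1) j hij (by omega)
      exact (hz1 i).2.trans_le (h1.trans (hz1 j).1.le)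
    have hyinj : StrictAnti y := by
      intro i j hij
      have h1 := hle (i + 1) j hij (by omega)
      have h2 := (hy1 i).1
      have h3 := (hy1 j).2
      linarith
    have hD0 : D = 0 := by
      refine Polynomial.eq_zero_of_natDegree_lt_card_of_eval_eq_zero D
        (f := (Sum.elim z y : Fin (m + 1) ⊕ Fin (m + 1) → ℝ)) ?_ ?_ ?_
      · refine hzinj.injective.sumElim hyinj.injective fun i j h => ?_
        have h1 := (hz1 i).1
        have h2 := (hy1 j).2
        have h3 := (hx i (by omega)).1
        have h4 := (hx j (by omega)).1
        linarith
      · rintro (i | i)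
        · exact hz2 i
        · exact hy2 i
      · have h1 : D.natDegree ≤ 2 * m + 1 := (Polynomial.natDegree_sub_le _ _).trans
          (max_le hPdeg hq)
        simp only [Fintype.card_sum, Fintype.card_fin]
        omega
    have h1 := hpos 0 (by omega)
    rw [hD0] at h1
    simp only [Polynomial.eval_zero, pow_zero, one_mul, zero_add] at h1
    exact absurd h1 (not_lt.2 (le_abs_self L))
  refine le_antisymm ?_ ?_
  · refine le_trans (csInf_le ⟨L, ?_⟩ ⟨P, hPdeg, rfl⟩) hupper
    rintro _ ⟨q, hq, rfl⟩
    exact hlower q hq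
  · refine le_csInf ⟨_, P, hPdeg, rfl⟩ ?_
    rintro _ ⟨q, hq, rfl⟩
    exact hlower q hq

/-! ### The boundary of the region -/

/-- A continuous real function that is monotone near every point where its value avoids a finite set
is monotone. If `v s > v t` with `s < t`, consider the last passage in `[s, t]` through a level
`c ∉ D` between the two values. -/
lemma monotone_of_locally_monotone_off_finite {v : ℝ → ℝ} (hv : Continuous v) {D : Set ℝ}
    (hD : D.Finite)
    (hloc : ∀ t, v t ∉ D → ∃ δ > 0, MonotoneOn v (Ioo (t - δ) (t + δ))) : Monotone v := by
  intro s t hst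
  by_contra! hlt
  obtain ⟨c, hc, hcD⟩ := ((Ioo_infinite hlt).sdiff hD).nonempty
  set S := Icc s t ∩ {x | c ≤ v x} with hS
  have hScl : IsCompact S := isCompact_Icc.inter_right (isClosed_le continuous_const hv)
  have hSne : S.Nonempty := ⟨s, ⟨le_rfl, hst⟩, hc.2.le⟩
  set τ := sSup S
  have hτ : τ ∈ S := hScl.sSup_mem hSne
  have hτt : τ < t := by
    refine lt_of_le_of_ne hτ.1.2 fun h => ?_
    have h1 : c ≤ v τ := hτ.2
    rw [h] at h1
    linarith [hc.1]
  have hafter : ∀ x, τ < x → x ≤ t → v x < c := by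
    intro x hx hxt
    by_contra! h
    exact absurd (le_csSup hScl.bddAbove ⟨⟨hτ.1.1.trans hx.le, hxt⟩, h⟩) (not_le.2 hx)
  have hvτ : v τ = c := by
    refine le_antisymm ?_ hτ.2
    refine le_of_tendsto (hv.continuousAt.tendsto.mono_left
      (nhdsWithin_le_nhds (s := Ioi τ))) ?_
    filter_upwards [Ioc_mem_nhdsGT hτt] with x hx
    exact (hafter x hx.1 hx.2).le
  obtain ⟨δ, hδ, hmono⟩ := hloc τ (hvτ ▸ hcD)
  set x := τ + min (δ / 2) (t - τ) with hx
  have hmin : 0 < min (δ / 2) (t - τ) := lt_min (by linarith) (by linarith)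
  have h1 := min_le_left (δ / 2) (t - τ)
  have h2 := min_le_right (δ / 2) (t - τ)
  have h3 := hmono (a := τ) (b := x) ⟨by linarith, by linarith⟩ ⟨by linarith, by linarith⟩
    (by linarith)
  have h4 := hafter x (by linarith) (by linarith)
  linarith

lemma gB_nonneg (B y : ℝ) : 0 ≤ gB B y := by
  unfold gB
  split_ifs
  · exact le_rfl
  · exact Real.arccos_nonneg _

lemma gB_of_le {B y : ℝ} (h : y ≤ B) : gB B y = 0 := if_pos h

lemma gB_lt (B y : ℝ) : gB B y < Real.pi / 2 := by
  unfold gB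
  split_ifs
  · positivity
  · exact Real.arccos_lt_pi_div_two.2 (by positivity)

lemma gB_eq_arccos {B y : ℝ} (h : B ≤ y) :
    gB B y = Real.arccos (Real.cosh B / Real.cosh y) := by
  unfold gB
  split_ifs with h'
  · rw [le_antisymm h' h, div_self (Real.cosh_pos _).ne', Real.arccos_one]
  · rfl

lemma cos_gB {B y : ℝ} (hB : 0 < B) (h : B ≤ y) :
    Real.cos (gB B y) = Real.cosh B / Real.cosh y := by
  rw [gB_eq_arccos h, Real.cos_arccos]
  · have : 0 < Real.cosh B / Real.cosh y := div_pos (Real.cosh_pos _) (Real.cosh_pos _)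
    linarith
  · rw [div_le_one (Real.cosh_pos _), Real.cosh_le_cosh, abs_of_pos hB,
      abs_of_pos (hB.trans_le h)]
    exact h

lemma continuous_gB (B : ℝ) : Continuous (gB B) := by
  unfold gB
  refine Continuous.if_le continuous_const ?_ continuous_id continuous_const ?_
  · exact Real.continuous_arccos.comp
      (continuous_const.div Real.continuous_cosh fun y => (Real.cosh_pos y).ne')
  · rintro y rfl
    simp [div_self (Real.cosh_pos _).ne']

/-- On the curve `re = g_B(im)`, the image under `cos` moves strictly along the line
`Re = cosh B`. -/
lemma sin_gB_mul_sinh_lt {B y y' : ℝ} (hB : 0 < B) (h : B ≤ y) (hy : y < y') :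
    Real.sin (gB B y) * Real.sinh y < Real.sin (gB B y') * Real.sinh y' := by
  have hy0 : 0 < y := hB.trans_le h
  have hs : Real.sinh y < Real.sinh y' := Real.sinh_lt_sinh.2 hy
  have hs0 : 0 < Real.sinh y := Real.sinh_pos_iff.2 hy0
  have hg : gB B y < gB B y' := by
    rw [gB_eq_arccos h, gB_eq_arccos (h.trans hy.le)]
    refine Real.strictAntiOn_arccos ?_ ?_ ?_
    · refine ⟨by have : 0 < Real.cosh B / Real.cosh y' := div_pos (Real.cosh_pos _) (Real.cosh_pos _)
                 linarith, ?_⟩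
      rw [div_le_one (Real.cosh_pos _), Real.cosh_le_cosh, abs_of_pos hB,
        abs_of_pos (by linarith)]
      linarith
    · refine ⟨by have : 0 < Real.cosh B / Real.cosh y := div_pos (Real.cosh_pos _) (Real.cosh_pos _)
                 linarith, ?_⟩
      rw [div_le_one (Real.cosh_pos _), Real.cosh_le_cosh, abs_of_pos hB,
        abs_of_pos (by linarith)]
      linarith
    · refine div_lt_div_of_pos_left (Real.cosh_pos _) (Real.cosh_pos _) ?_
      rw [Real.cosh_lt_cosh, abs_of_pos hy0, abs_of_pos (by linarith)]
      exact hy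
  have hsin : Real.sin (gB B y) < Real.sin (gB B y') :=
    Real.sin_lt_sin_of_lt_of_le_pi_div_two (by linarith [gB_nonneg B y, Real.pi_pos])
      (gB_lt B y').le hg
  have hsin0 : 0 ≤ Real.sin (gB B y) := Real.sin_nonneg_of_nonneg_of_le_pi (gB_nonneg B y)
    (by linarith [gB_lt B y, Real.pi_pos])
  nlinarith

lemma closure_ΩBm {B : ℝ} {m : ℕ} {z : ℂ} (hz : z ∈ closure (ΩBm B m)) :
    0 ≤ z.im ∧ gB B z.im ≤ z.re ∧ z.re ≤ Real.pi * (m + 1) := by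
  have hcl : IsClosed {z : ℂ | 0 ≤ z.im ∧ gB B z.im ≤ z.re ∧ z.re ≤ Real.pi * (m + 1)} := by
    refine (isClosed_le continuous_const Complex.continuous_im).inter ((isClosed_le
      ((continuous_gB B).comp Complex.continuous_im) Complex.continuous_re).inter
      (isClosed_le Complex.continuous_re continuous_const))
  have hsub : ΩBm B m ⊆ {z : ℂ | 0 ≤ z.im ∧ gB B z.im ≤ z.re ∧ z.re ≤ Real.pi * (m + 1)} :=
    fun w hw => ⟨hw.1.le, hw.2.1.le, hw.2.2.le⟩
  exact closure_minimal hsub hcl hz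

lemma isOpen_ΩBm (B : ℝ) (m : ℕ) : IsOpen (ΩBm B m) :=
  (isOpen_lt continuous_const Complex.continuous_im).inter ((isOpen_lt
      ((continuous_gB B).comp Complex.continuous_im) Complex.continuous_re).inter
      (isOpen_lt Complex.continuous_re continuous_const))

/-- The boundary of `Ω_{B,m}`: the bottom edge, the left edge `re = g_B(im)` and the right ray. -/
def bdΩ (B : ℝ) (m : ℕ) : Set ℂ :=
  {z | (0 ≤ z.im ∧ gB B z.im ≤ z.re ∧ z.re ≤ Real.pi * (m + 1)) ∧
    (z.im = 0 ∨ z.re = gB B z.im ∨ z.re = Real.pi * (m + 1))}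

/-- A real coordinate on the boundary of `Ω_{B,m}`, increasing in the direction that keeps the region
on the left: `-im` on the left edge (which lies in `re < π/2`), `re` on the bottom edge, and `re + im`
on the right ray. -/
noncomputable def bdCoord (z : ℂ) : ℝ :=
  if z.re < Real.pi / 2 ∧ 0 < z.im then -z.im else z.re + z.im

lemma pi_le (m : ℕ) : Real.pi ≤ Real.pi * (m + 1) := by
  have : (0 : ℝ) ≤ Real.pi * m := by positivity
  linarith

lemma bdΩ_cases {B : ℝ} {m : ℕ} {z : ℂ} (hz : z ∈ bdΩ B m) :
    (0 < z.im ∧ z.re = gB B z.im ∧ bdCoord z = -z.im) ∨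
    (z.im = 0 ∧ 0 ≤ z.re ∧ z.re ≤ Real.pi * (m + 1) ∧ bdCoord z = z.re) ∨
    (0 < z.im ∧ z.re = Real.pi * (m + 1) ∧ bdCoord z = z.re + z.im) := by
  obtain ⟨⟨h1, h2, h3⟩, h4⟩ := hz
  have hg := gB_lt B z.im
  have hp := pi_le m
  have hpi := Real.pi_pos
  rcases h1.eq_or_lt with h | h
  · right; left
    exact ⟨h.symm, (gB_nonneg _ _).trans h2, h3, by simp [bdCoord, ← h]⟩
  · rcases h4 with h4 | h4 | h4
    · exact absurd h4 h.ne'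
    · left
      exact ⟨h, h4, if_pos ⟨by rw [h4]; exact hg, h⟩⟩
    · right; right
      exact ⟨h, h4, if_neg fun h' => by rw [h4] at h'; linarith [h'.1]⟩

lemma continuousOn_bdCoord {B : ℝ} (hB : 0 < B) (m : ℕ) : ContinuousOn bdCoord (bdΩ B m) := by
  set E₁ : Set ℂ := {z | 0 ≤ z.im ∧ z.re = gB B z.im}
  set E₂ : Set ℂ := {z | 0 ≤ z.im ∧ (z.im = 0 ∨ z.re = Real.pi * (m + 1))}
  have hc1 : IsClosed E₁ := (isClosed_le continuous_const Complex.continuous_im).inter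
    (isClosed_eq Complex.continuous_re ((continuous_gB B).comp Complex.continuous_im))
  have hc2 : IsClosed E₂ := (isClosed_le continuous_const Complex.continuous_im).inter
    ((isClosed_eq Complex.continuous_im continuous_const).union
      (isClosed_eq Complex.continuous_re continuous_const))
  have hp := pi_le m
  have hpi := Real.pi_pos
  have h1 : ContinuousOn bdCoord E₁ := by
    refine ContinuousOn.congr (f := fun z : ℂ => -z.im) (by fun_prop) ?_
    rintro z ⟨hz1, hz2⟩
    rcases hz1.eq_or_lt with h | h
    · rw [← h, gB_of_le hB.le] at hz2
      simp [bdCoord, ← h, hz2]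
    · exact if_pos ⟨by rw [hz2]; exact gB_lt _ _, h⟩
  have h2 : ContinuousOn bdCoord E₂ := by
    refine ContinuousOn.congr (f := fun z : ℂ => z.re + z.im) (by fun_prop) ?_
    rintro z ⟨hz1, hz2⟩
    refine if_neg ?_
    rintro ⟨h3, h4⟩
    rcases hz2 with h | h
    · linarith
    · linarith
  refine (h1.union_of_isClosed h2 hc1 hc2).mono ?_
  rintro z ⟨⟨hz1, hz2, hz3⟩, h | h | h⟩
  · exact Or.inr ⟨hz1, Or.inl h⟩
  · exact Or.inl ⟨hz1, h⟩
  · exact Or.inr ⟨hz1, Or.inr h⟩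

/-- A bijective holomorphic map of the upper half-plane onto `Ω`, continuous up to the real axis, sends
no real `t` into `Ω`. Otherwise `Φ t = Φ q` with `Im q > 0`; by the open mapping theorem points near
`t` have images in `Φ {Im w > Im q / 2}`, contradicting injectivity. -/
lemma boundary_notMem {Φ : ℂ → ℂ} {Ω : Set ℂ} (hc : ContinuousOn Φ {w | 0 ≤ w.im})
    (hd : DifferentiableOn ℂ Φ {w | 0 < w.im}) (hb : BijOn Φ {w | 0 < w.im} Ω) (t : ℝ) :
    Φ t ∉ Ω := by
  intro ht
  obtain ⟨q, hq, hqt⟩ := hb.surjOn ht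
  have hq : 0 < q.im := hq
  have hHo : IsOpen {w : ℂ | 0 < w.im} := isOpen_lt continuous_const Complex.continuous_im
  have han : AnalyticAt ℂ Φ q := hd.analyticAt (hHo.mem_nhds hq)
  rcases han.eventually_constant_or_nhds_le_map_nhds with h | h
  · -- `Φ` is injective near `q`, hence not locally constant there
    have h1 : ∀ᶠ z in nhds q, z = q := by
      filter_upwards [h, hHo.mem_nhds hq] with z hz hzH
      exact hb.injOn hzH hq hz
    have h2 : ∃ᶠ z in nhdsWithin q {q}ᶜ, z = q := (h1.filter_mono nhdsWithin_le_nhds).frequently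
    exact h2 (eventually_mem_nhdsWithin.mono fun z hz => hz)
  · have hU : {w : ℂ | q.im / 2 < w.im} ∈ nhds q :=
      (isOpen_lt continuous_const Complex.continuous_im).mem_nhds (by
        change q.im / 2 < q.im; linarith)
    have hV : Φ '' {w : ℂ | q.im / 2 < w.im} ∈ nhds (Φ t) := by
      rw [← hqt]; exact h (image_mem_map hU)
    have ht0 : ContinuousWithinAt Φ {w | 0 ≤ w.im} (t : ℂ) := hc _ (by simp)
    have h3 : ∀ᶠ w in nhdsWithin (t : ℂ) {w | 0 ≤ w.im}, Φ w ∈ Φ '' {w : ℂ | q.im / 2 < w.im} :=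
      ht0 hV
    have h4 : Tendsto (fun s : ℝ => (t : ℂ) + s * Complex.I) (nhdsWithin 0 (Ioi 0))
        (nhdsWithin (t : ℂ) {w | 0 ≤ w.im}) := by
      refine tendsto_nhdsWithin_iff.2 ⟨?_, ?_⟩
      · have : Continuous (fun s : ℝ => (t : ℂ) + s * Complex.I) := by fun_prop
        have := this.tendsto 0
        simp only [Complex.ofReal_zero, zero_mul, add_zero] at this
        exact this.mono_left nhdsWithin_le_nhds
      · filter_upwards [self_mem_nhdsWithin] with s hs
        have hs : 0 < s := hs
        simp [hs.le]
    have h5 := h4.eventually h3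
    have h6 : ∀ᶠ s : ℝ in nhdsWithin 0 (Ioi 0), s < q.im / 2 :=
      nhdsWithin_le_nhds (Iio_mem_nhds (by linarith))
    obtain ⟨s, ⟨p, hp, hps⟩, hs2, hs3⟩ := (h5.and (h6.and self_mem_nhdsWithin)).exists
    have hs3 : 0 < s := hs3
    have hp : q.im / 2 < p.im := hp
    have hpH : p ∈ {w : ℂ | 0 < w.im} := by change 0 < p.im; linarith
    have := hb.injOn hpH (by simpa using hs3) hps
    rw [this] at hp
    simp at hp
    linarith

/-- Local form of `monotoneOn_boundary`. Here `P` singles out the boundary edge on which `F` is real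
and `v` is an increasing function of `F`. -/
lemma local_monotone_of_eventually {F : ℂ → ℂ} {v : ℝ → ℝ} {t : ℝ}
    (hc : ContinuousOn F {w | 0 ≤ w.im}) (hd : DifferentiableOn ℂ F {w | 0 < w.im})
    (hp : ∀ᶠ w in nhdsWithin (t : ℂ) {w | 0 ≤ w.im}, 0 ≤ (F w).im)
    (P : ℝ → Prop) (hP : ∀ᶠ s in nhds t, P s) (hr : ∀ s, P s → (F s).im = 0)
    (hv : ∀ s s', P s → P s' → (F s).re ≤ (F s').re → v s ≤ v s') :
    ∃ δ > 0, MonotoneOn v (Ioo (t - δ) (t + δ)) := by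
  obtain ⟨δ₁, hδ₁, h1⟩ := Metric.mem_nhdsWithin_iff.1 hp
  obtain ⟨δ₂, hδ₂, h2⟩ := Metric.eventually_nhds_iff.1 hP
  have hPs : ∀ s ∈ Ioo (t - min δ₁ δ₂) (t + min δ₁ δ₂), P s := by
    intro s hs
    refine h2 ?_
    have := min_le_right δ₁ δ₂
    rw [Real.dist_eq, abs_lt]
    constructor <;> linarith [hs.1, hs.2]
  have hball : Metric.ball (t : ℂ) (min δ₁ δ₂) ⊆ Metric.ball (t : ℂ) δ₁ :=
    Metric.ball_subset_ball (min_le_left _ _)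
  have hHo : IsOpen {w : ℂ | 0 < w.im} := isOpen_lt continuous_const Complex.continuous_im
  have hm := monotoneOn_boundary (F := F) (t := t) (δ := min δ₁ δ₂) (hc.mono inter_subset_right)
    (fun z _ hz => hd.differentiableAt (hHo.mem_nhds hz))
    (fun x hx => hr x (hPs x (by
      rw [Metric.mem_ball, Complex.dist_eq, ← Complex.ofReal_sub, Complex.norm_real,
        Real.norm_eq_abs, abs_lt] at hx
      constructor <;> linarith [hx.1, hx.2])))
    (fun z hz hz0 => h1 ⟨hball hz, hz0.le⟩)
  exact ⟨_, lt_min hδ₁ hδ₂, fun s hs s' hs' hss => hv s s' (hPs s hs) (hPs s' hs') (hm hs hs' hss)⟩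

lemma cos_re (z : ℂ) : (Complex.cos z).re = Real.cos z.re * Real.cosh z.im := by
  rw [Complex.cos_eq]
  simp [Complex.cos_ofReal_re, Complex.sin_ofReal_re, Complex.cosh_ofReal_re,
    Complex.sinh_ofReal_re, Complex.cos_ofReal_im, Complex.sin_ofReal_im, Complex.cosh_ofReal_im,
    Complex.sinh_ofReal_im, -Complex.ofReal_cos, -Complex.ofReal_sin]

lemma cos_im (z : ℂ) : (Complex.cos z).im = -(Real.sin z.re * Real.sinh z.im) := by
  rw [Complex.cos_eq]
  simp [Complex.cos_ofReal_re, Complex.sin_ofReal_re, Complex.cosh_ofReal_re,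
    Complex.sinh_ofReal_re, Complex.cos_ofReal_im, Complex.sin_ofReal_im, Complex.cosh_ofReal_im,
    Complex.sinh_ofReal_im]

/-- The image of the real line under `Φ` runs along the boundary of `Ω_{B,m}` in the positive
direction. The corners have the coordinates `-B`, `0` and `π(m+1)`; elsewhere the boundary point lies
on one open edge, which an affine map or `cos` carries to the real axis. -/
lemma bdCoord_monotone {B : ℝ} (hB : 0 < B) {m : ℕ} {Φ : ℂ → ℂ}
    (hc : ContinuousOn Φ {w | 0 ≤ w.im})
    (hd : DifferentiableOn ℂ Φ {w | 0 < w.im})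
    (hcl : ∀ w : ℂ, 0 ≤ w.im → 0 ≤ (Φ w).im ∧ gB B (Φ w).im ≤ (Φ w).re ∧
      (Φ w).re ≤ Real.pi * (m + 1))
    (hbd : ∀ t : ℝ, Φ t ∈ bdΩ B m) :
    Continuous (fun t : ℝ => bdCoord (Φ t)) ∧ Monotone (fun t : ℝ => bdCoord (Φ t)) := by
  have hcr : Continuous (fun t : ℝ => Φ t) := hc.comp_continuous Complex.continuous_ofReal
    (by simp)
  have hv : Continuous (fun t : ℝ => bdCoord (Φ t)) :=
    (continuousOn_bdCoord hB m).comp_continuous hcr hbd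
  refine ⟨hv, monotone_of_locally_monotone_off_finite hv
    (D := {-B, 0, Real.pi * (m + 1)}) (by simp) ?_⟩
  intro t ht
  simp only [mem_insert_iff, mem_singleton_iff, not_or] at ht
  obtain ⟨ht1, ht2, ht3⟩ := ht
  have hcases := fun s : ℝ => bdΩ_cases (hbd s)
  have hpm : 0 < Real.pi * (m + 1) := Real.pi_pos.trans_le (pi_le m)
  have hcw : ContinuousWithinAt Φ {w | 0 ≤ w.im} (t : ℂ) := hc _ (by simp)
  rcases lt_or_gt_of_ne ht1 with h | h
  · -- the curved edge, straightened by `cos`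
    have hlt := hv.continuousAt.eventually (gt_mem_nhds h)
    have hedge : ∀ s : ℝ, bdCoord (Φ s) < -B →
        B < (Φ s).im ∧ (Φ s).re = gB B (Φ s).im ∧ bdCoord (Φ s) = -(Φ s).im := by
      intro s hs
      rcases hcases s with ⟨h1, h2, h3⟩ | ⟨h1, h2, h3, h4⟩ | ⟨h1, h2, h3⟩
      · exact ⟨by linarith, h2, h3⟩
      · linarith
      · linarith
    refine local_monotone_of_eventually (F := fun w => Complex.I * (Real.cosh B - Complex.cos (Φ w)))
      ?_ ?_ ?_ (fun s => bdCoord (Φ s) < -B) hlt ?_ ?_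
    · exact continuousOn_const.mul (continuousOn_const.sub
        (Complex.continuous_cos.comp_continuousOn hc))
    · exact (hd.ccos.const_sub _).const_mul _
    · obtain ⟨h1, h2, h3⟩ := hedge t h
      have e1 : ∀ᶠ w in nhdsWithin (t : ℂ) {w | 0 ≤ w.im}, B < (Φ w).im :=
        (Complex.continuous_im.continuousAt.comp_continuousWithinAt hcw).eventually
          (lt_mem_nhds h1)
      have e2 : ∀ᶠ w in nhdsWithin (t : ℂ) {w | 0 ≤ w.im}, (Φ w).re < Real.pi / 2 :=
        (Complex.continuous_re.continuousAt.comp_continuousWithinAt hcw).eventually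
          (gt_mem_nhds (by simp only [Function.comp]; rw [h2]; exact gB_lt _ _))
      filter_upwards [e1, e2, self_mem_nhdsWithin] with w hw1 hw2 hw3
      obtain ⟨-, hw4, -⟩ := hcl w hw3
      have h5 : Real.cos (Φ w).re ≤ Real.cosh B / Real.cosh (Φ w).im := by
        rw [← cos_gB hB hw1.le]
        exact Real.cos_le_cos_of_nonneg_of_le_pi (gB_nonneg _ _) (by linarith [Real.pi_pos]) hw4
      rw [le_div_iff₀ (Real.cosh_pos _)] at h5
      rw [Complex.I_mul_im, Complex.sub_re, Complex.ofReal_re, cos_re]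
      linarith
    · intro s hs
      obtain ⟨h1, h2, h3⟩ := hedge s hs
      have h5 := cos_gB hB h1.le
      rw [← h2, eq_div_iff (Real.cosh_pos _).ne'] at h5
      rw [Complex.I_mul_im, Complex.sub_re, Complex.ofReal_re, cos_re]
      linarith
    · intro s s' hs hs' hle
      obtain ⟨h1, h2, h3⟩ := hedge s hs
      obtain ⟨h1', h2', h3'⟩ := hedge s' hs'
      have hre : ∀ z : ℂ, (Complex.I * (Real.cosh B - Complex.cos z)).re =
          -(Real.sin z.re * Real.sinh z.im) := by
        intro z
        rw [Complex.I_mul_re, Complex.sub_im, Complex.ofReal_im, cos_im]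
        ring
      simp only [hre, h2, h2'] at hle
      rw [h3, h3']
      by_contra! hcon
      have := sin_gB_mul_sinh_lt hB h1.le (y' := (Φ s').im) (by linarith)
      linarith
  rcases lt_or_gt_of_ne ht2 with hh1 | hh1
  · -- the vertical segment from `iB` to `0`
    refine local_monotone_of_eventually (F := fun w => Complex.I * Φ w)
      (continuousOn_const.mul hc) (hd.const_mul _) ?_
      (fun s => -B < bdCoord (Φ s) ∧ bdCoord (Φ s) < 0)
      ((hv.continuousAt.eventually (lt_mem_nhds h)).and
        (hv.continuousAt.eventually (gt_mem_nhds hh1))) ?_ ?_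
    · filter_upwards [self_mem_nhdsWithin] with w hw
      rw [Complex.I_mul_im]
      exact (gB_nonneg _ _).trans (hcl w hw).2.1
    · rintro s ⟨hs1, hs2⟩
      rw [Complex.I_mul_im]
      rcases hcases s with ⟨h1, h2, h3⟩ | ⟨h1, h2, h3, h4⟩ | ⟨h1, h2, h3⟩
      · rw [h2, gB_of_le (by linarith)]
      · linarith
      · linarith
    · rintro s s' ⟨hs1, hs2⟩ ⟨hs1', hs2'⟩ hle
      simp only [Complex.I_mul_re] at hle
      rcases hcases s with ⟨h1, h2, h3⟩ | ⟨h1, h2, h3, h4⟩ | ⟨h1, h2, h3⟩ <;>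
      rcases hcases s' with ⟨h1', h2', h3'⟩ | ⟨h1', h2', h3', h4'⟩ | ⟨h1', h2', h3'⟩ <;>
      linarith
  rcases lt_or_gt_of_ne ht3 with hh2 | hh2
  · -- the bottom edge
    refine local_monotone_of_eventually (F := Φ) hc hd ?_
      (fun s => 0 < bdCoord (Φ s) ∧ bdCoord (Φ s) < Real.pi * (m + 1))
      ((hv.continuousAt.eventually (lt_mem_nhds hh1)).and
        (hv.continuousAt.eventually (gt_mem_nhds hh2))) ?_ ?_
    · filter_upwards [self_mem_nhdsWithin] with w hw
      exact (hcl w hw).1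
    · rintro s ⟨hs1, hs2⟩
      rcases hcases s with ⟨h1, h2, h3⟩ | ⟨h1, h2, h3, h4⟩ | ⟨h1, h2, h3⟩ <;> linarith
    · rintro s s' ⟨hs1, hs2⟩ ⟨hs1', hs2'⟩ hle
      rcases hcases s with ⟨h1, h2, h3⟩ | ⟨h1, h2, h3, h4⟩ | ⟨h1, h2, h3⟩ <;>
      rcases hcases s' with ⟨h1', h2', h3'⟩ | ⟨h1', h2', h3', h4'⟩ | ⟨h1', h2', h3'⟩ <;>
      linarith
  · -- the vertical ray on the right
    refine local_monotone_of_eventually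
      (F := fun w => Complex.I * (((Real.pi * (m + 1) : ℝ) : ℂ) - Φ w))
      (continuousOn_const.mul (continuousOn_const.sub hc)) ((hd.const_sub _).const_mul _) ?_
      (fun s => Real.pi * (m + 1) < bdCoord (Φ s))
      (hv.continuousAt.eventually (lt_mem_nhds hh2)) ?_ ?_
    · filter_upwards [self_mem_nhdsWithin] with w hw
      rw [Complex.I_mul_im, Complex.sub_re, Complex.ofReal_re]
      linarith [(hcl w hw).2.2]
    · intro s hs
      rw [Complex.I_mul_im, Complex.sub_re, Complex.ofReal_re]
      rcases hcases s with ⟨h1, h2, h3⟩ | ⟨h1, h2, h3, h4⟩ | ⟨h1, h2, h3⟩ <;> linarith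
    · intro s s' hs hs' hle
      simp only [Complex.I_mul_re, Complex.sub_im, Complex.ofReal_im] at hle
      rcases hcases s with ⟨h1, h2, h3⟩ | ⟨h1, h2, h3, h4⟩ | ⟨h1, h2, h3⟩ <;>
      rcases hcases s' with ⟨h1', h2', h3'⟩ | ⟨h1', h2', h3', h4'⟩ | ⟨h1', h2', h3'⟩ <;>
      linarith

/-! ### Square root and growth -/

/-- Removes the factor `(‖w‖ + 1) ^ 2 / |Im w|` in an a priori bound, by applying the maximum
principle on `|w| ≤ r` to `V w * (w ^ 2 - r ^ 2) ^ (m + 1)`: on `|w| = r` one has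
`|w ^ 2 - r ^ 2| = 2 r |Im w|`, which compensates the blow-up near the real axis. -/
lemma growth_of_offReal {V : ℂ → ℂ} (hV : Differentiable ℂ V) (m : ℕ) {C : ℝ} (hC : 0 < C)
    (h : ∀ w : ℂ, w.im ≠ 0 → ∃ ω : ℝ, 0 ≤ ω ∧ ω * |w.im| ≤ C * (‖w‖ + 1) ^ 2 ∧
      ‖V w‖ ≤ √‖w‖ * (1 + ω ^ (m + 1))) :
    ∃ K : ℝ, ∀ r : ℝ, 1 ≤ r → ∀ w : ℂ, ‖w‖ ≤ r / 2 → ‖V w‖ ≤ K * r ^ (m + 1) * √r := by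
  set K₀ : ℝ := 2 ^ (m + 1) + (8 * C) ^ (m + 1) with hK₀
  have hK₀0 : 0 < K₀ := by positivity
  refine ⟨K₀ * 2 ^ (m + 1), fun r hr w hw => ?_⟩
  have hr0 : 0 < r := by linarith
  set G : ℂ → ℂ := fun w => V w * (w ^ 2 - (r : ℂ) ^ 2) ^ (m + 1) with hG
  have hsphere : ∀ z ∈ frontier (Metric.ball (0 : ℂ) r), ‖G z‖ ≤ √r * (K₀ * (r ^ 3) ^ (m + 1)) := by
    intro z hz
    rw [frontier_ball _ hr0.ne', mem_sphere_zero_iff_norm] at hz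
    have e1 : z ^ 2 - (r : ℂ) ^ 2 = z * (2 * z.im * Complex.I) := by
      have e2 : (r : ℂ) ^ 2 = z * (starRingEnd ℂ) z := by
        rw [Complex.mul_conj, Complex.normSq_eq_norm_sq, hz]; push_cast; ring
      have e3 := Complex.sub_conj z
      push_cast at e3
      rw [e2]
      linear_combination z * e3
    have e4 : ‖z ^ 2 - (r : ℂ) ^ 2‖ = 2 * r * |z.im| := by
      rw [e1, norm_mul, norm_mul, norm_mul, hz]
      simp
      ring
    rw [hG]
    simp only [norm_mul, norm_pow, e4]
    by_cases h0 : z.im = 0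
    · rw [h0]
      simp only [abs_zero, mul_zero, ne_eq, Nat.add_eq_zero_iff, one_ne_zero, and_false,
        not_false_eq_true, zero_pow]
      positivity
    obtain ⟨ω, hω0, hω1, hω2⟩ := h z h0
    rw [hz] at hω1 hω2
    have hy : |z.im| ≤ r := hz ▸ Complex.abs_im_le_norm z
    have hr3 : r ^ 2 ≤ r ^ 3 := pow_le_pow_right₀ hr (by norm_num)
    have b1 : (2 * r * |z.im|) ^ (m + 1) ≤ (2 * r ^ 3) ^ (m + 1) := by
      refine pow_le_pow_left₀ (by positivity) ?_ _
      nlinarith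
    have b2 : (ω * (2 * r * |z.im|)) ^ (m + 1) ≤ (8 * C * r ^ 3) ^ (m + 1) := by
      refine pow_le_pow_left₀ (by positivity) ?_ _
      have : (r + 1) ^ 2 ≤ 4 * r ^ 2 := by nlinarith
      calc ω * (2 * r * |z.im|) = 2 * r * (ω * |z.im|) := by ring
        _ ≤ 2 * r * (C * (r + 1) ^ 2) := by gcongr
        _ ≤ 2 * r * (C * (4 * r ^ 2)) := by gcongr
        _ = 8 * C * r ^ 3 := by ring
    calc ‖V z‖ * (2 * r * |z.im|) ^ (m + 1)
        ≤ √r * (1 + ω ^ (m + 1)) * (2 * r * |z.im|) ^ (m + 1) := by gcongr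
      _ = √r * ((2 * r * |z.im|) ^ (m + 1) + (ω * (2 * r * |z.im|)) ^ (m + 1)) := by
          rw [mul_pow ω]; ring
      _ ≤ √r * ((2 * r ^ 3) ^ (m + 1) + (8 * C * r ^ 3) ^ (m + 1)) := by gcongr
      _ = √r * (K₀ * (r ^ 3) ^ (m + 1)) := by rw [mul_pow, mul_pow, hK₀]; ring
  have hGd : Differentiable ℂ G := by
    rw [hG]; fun_prop
  have hmax := Complex.norm_le_of_forall_mem_frontier_norm_le Metric.isBounded_ball
    hGd.diffContOnCl hsphere (z := w) (by
      rw [closure_ball _ hr0.ne', mem_closedBall_zero_iff]; linarith)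
  rw [hG] at hmax
  simp only [norm_mul, norm_pow] at hmax
  have hlow : r ^ 2 / 2 ≤ ‖w ^ 2 - (r : ℂ) ^ 2‖ := by
    have h1 := norm_sub_norm_le ((r : ℂ) ^ 2) (w ^ 2)
    rw [norm_sub_rev, norm_pow, norm_pow, Complex.norm_real, Real.norm_eq_abs, sq_abs] at h1
    nlinarith [norm_nonneg w]
  have h2 : ‖V w‖ * (r ^ 2 / 2) ^ (m + 1) ≤ √r * (K₀ * (r ^ 3) ^ (m + 1)) :=
    (mul_le_mul_of_nonneg_left (pow_le_pow_left₀ (by positivity) hlow _) (norm_nonneg _)).trans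
      hmax
  refine le_of_mul_le_mul_right (h2.trans_eq ?_) (show 0 < (r ^ 2 / 2) ^ (m + 1) by positivity)
  have : (r ^ 3) ^ (m + 1) = 2 ^ (m + 1) * r ^ (m + 1) * (r ^ 2 / 2) ^ (m + 1) := by
    rw [← mul_pow, ← mul_pow]; congr 1; ring
  rw [this]; ring

/-- The square root with values in the closed first quadrant; on the closed upper half-plane it is
a right inverse of squaring. -/
noncomputable def qSqrt (w : ℂ) : ℂ :=
  ⟨√((‖w‖ + w.re) / 2), √((‖w‖ - w.re) / 2)⟩

lemma continuous_qSqrt : Continuous qSqrt := by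
  have : qSqrt = fun w => ((√((‖w‖ + w.re) / 2) : ℝ) : ℂ) +
      ((√((‖w‖ - w.re) / 2) : ℝ) : ℂ) * Complex.I := by
    funext w
    apply Complex.ext <;> simp [qSqrt]
  rw [this]
  fun_prop

lemma qSqrt_sq {w : ℂ} (hw : 0 ≤ w.im) : qSqrt w ^ 2 = w := by
  have h1 : 0 ≤ (‖w‖ + w.re) / 2 := by
    linarith [neg_abs_le w.re, Complex.abs_re_le_norm w]
  have h2 : 0 ≤ (‖w‖ - w.re) / 2 := by
    linarith [le_abs_self w.re, Complex.abs_re_le_norm w]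
  have h3 : ‖w‖ ^ 2 = w.re ^ 2 + w.im ^ 2 := by
    rw [Complex.sq_norm, Complex.normSq_apply]; ring
  have h4 : √((‖w‖ + w.re) / 2) * √((‖w‖ - w.re) / 2) = w.im / 2 := by
    rw [← Real.sqrt_mul h1, Real.sqrt_eq_iff_mul_self_eq (mul_nonneg h1 h2) (by linarith)]
    nlinarith
  rw [sq]
  apply Complex.ext
  · simp only [qSqrt, Complex.mul_re]
    rw [Real.mul_self_sqrt h1, Real.mul_self_sqrt h2]; ring
  · simp only [qSqrt, Complex.mul_im]
    linarith

lemma qSqrt_mem {w : ℂ} (hw : 0 < w.im) : qSqrt w ∈ Q := by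
  have h3 : ‖w‖ ^ 2 = w.re ^ 2 + w.im ^ 2 := by
    rw [Complex.sq_norm, Complex.normSq_apply]; ring
  have h4 : |w.re| < ‖w‖ := abs_lt_of_sq_lt_sq (by nlinarith) (norm_nonneg _)
  rw [abs_lt] at h4
  exact ⟨Real.sqrt_pos.2 (by linarith), Real.sqrt_pos.2 (by linarith)⟩

lemma qSqrt_mem_closure (w : ℂ) : qSqrt w ∈ closure Q := by
  have : Q = Ioi 0 ×ℂ Ioi 0 := rfl
  rw [this, Complex.closure_reProdIm, closure_Ioi]
  exact ⟨Real.sqrt_nonneg _, Real.sqrt_nonneg _⟩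

lemma qSqrt_of_sq {z : ℂ} (hre : 0 ≤ z.re) (him : 0 ≤ z.im) : qSqrt (z ^ 2) = z := by
  have h3 : ‖z‖ ^ 2 = z.re ^ 2 + z.im ^ 2 := by
    rw [Complex.sq_norm, Complex.normSq_apply]; ring
  have h4 : (z ^ 2).re = z.re ^ 2 - z.im ^ 2 := by rw [sq, Complex.mul_re]; ring
  unfold qSqrt
  rw [norm_pow, h4, h3]
  apply Complex.ext
  · change √_ = _
    rw [show (z.re ^ 2 + z.im ^ 2 + (z.re ^ 2 - z.im ^ 2)) / 2 = z.re ^ 2 by ring,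
      Real.sqrt_sq hre]
  · change √_ = _
    rw [show (z.re ^ 2 + z.im ^ 2 - (z.re ^ 2 - z.im ^ 2)) / 2 = z.im ^ 2 by ring,
      Real.sqrt_sq him]

lemma qSqrt_of_nonneg {t : ℝ} (ht : 0 ≤ t) : qSqrt t = (√t : ℝ) := by
  have := qSqrt_of_sq (z := ((√t : ℝ) : ℂ)) (by simp) (by simp)
  rwa [← Complex.ofReal_pow, Real.sq_sqrt ht] at this

lemma qSqrt_re_of_nonpos {t : ℝ} (ht : t ≤ 0) : (qSqrt t).re = 0 := by
  simp [qSqrt, abs_of_nonpos ht]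

lemma norm_qSqrt {w : ℂ} (hw : 0 ≤ w.im) : ‖qSqrt w‖ = √‖w‖ := by
  rw [eq_comm, Real.sqrt_eq_iff_mul_self_eq (norm_nonneg _) (norm_nonneg _), ← sq, ← norm_pow,
    qSqrt_sq hw]

lemma bijOn_qSqrt : BijOn qSqrt {w | 0 < w.im} Q := by
  refine ⟨fun w hw => qSqrt_mem hw, fun w hw w' hw' h => ?_, fun z hz => ⟨z ^ 2, ?_, ?_⟩⟩
  · rw [← qSqrt_sq (le_of_lt hw), h, qSqrt_sq (le_of_lt hw')]
  · have : (z ^ 2).im = 2 * (z.re * z.im) := by rw [sq, Complex.mul_im]; ring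
    change 0 < (z ^ 2).im
    rw [this]
    have := mul_pos hz.1 hz.2
    linarith
  · exact qSqrt_of_sq hz.1.le hz.2.le

lemma differentiableOn_qSqrt : DifferentiableOn ℂ qSqrt {w | 0 < w.im} := by
  intro w hw
  have hne : qSqrt w ≠ 0 := fun h => by
    have := (qSqrt_mem hw).1
    simp [h] at this
  have h1 : HasDerivAt (fun z : ℂ => z ^ 2) (2 * qSqrt w) (qSqrt w) := by
    simpa using hasDerivAt_pow 2 (qSqrt w)
  refine (HasDerivAt.of_local_left_inverse continuous_qSqrt.continuousAt h1
    (mul_ne_zero two_ne_zero hne) ?_).differentiableAt.differentiableWithinAt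
  filter_upwards [(isOpen_lt continuous_const Complex.continuous_im).mem_nhds hw] with z hz
  exact qSqrt_sq (le_of_lt hz)

lemma norm_cos_le_exp {z : ℂ} (hz : 0 ≤ z.im) : ‖Complex.cos z‖ ≤ Real.exp z.im := by
  unfold Complex.cos
  rw [norm_div, Complex.norm_ofNat, div_le_iff₀ two_pos]
  refine (norm_add_le _ _).trans ?_
  rw [Complex.norm_exp, Complex.norm_exp]
  have h1 : (z * Complex.I).re = -z.im := by simp
  have h2 : (-z * Complex.I).re = z.im := by simp
  rw [h1, h2]
  have := Real.exp_le_exp.2 (show -z.im ≤ z.im by linarith)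
  linarith

/-- Growth of `√w (1 - L cos Φ)` off the real axis, for `Φ` mapping the upper half-plane into the
half-strip `0 < Re < π(m+1)`, `Im > 0`: the function `exp(-iΦ/(m+1))` maps into the lower
half-plane, hence grows moderately, and its `(m+1)`-st power dominates `cos Φ`. -/
lemma growth_upper {m : ℕ} {L : ℝ} (hL0 : 0 ≤ L) (hL1 : L ≤ 1) {Φ : ℂ → ℂ}
    (hd : DifferentiableOn ℂ Φ {w | 0 < w.im})
    (hΦ : ∀ w : ℂ, 0 < w.im → 0 < (Φ w).im ∧ 0 < (Φ w).re ∧ (Φ w).re < Real.pi * (m + 1)) :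
    ∃ C : ℝ, 0 < C ∧ ∀ w : ℂ, 0 < w.im → ∃ ω : ℝ, 0 ≤ ω ∧ ω * |w.im| ≤ C * (‖w‖ + 1) ^ 2 ∧
      ‖qSqrt w * (1 - L * Complex.cos (Φ w))‖ ≤ √‖w‖ * (1 + ω ^ (m + 1)) := by
  have hm : (0 : ℝ) < m + 1 := by positivity
  set W : ℂ → ℂ := fun w => Complex.exp (((m + 1 : ℝ)⁻¹ : ℝ) * (-Complex.I * Φ w)) with hW
  have hre : ∀ w, ((((m + 1 : ℝ)⁻¹ : ℝ) : ℂ) * (-Complex.I * Φ w)).re = (m + 1 : ℝ)⁻¹ * (Φ w).im := by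
    intro w
    rw [Complex.re_ofReal_mul]
    simp
  have him : ∀ w, ((((m + 1 : ℝ)⁻¹ : ℝ) : ℂ) * (-Complex.I * Φ w)).im =
      -((m + 1 : ℝ)⁻¹ * (Φ w).re) := by
    intro w
    rw [Complex.im_ofReal_mul]
    simp
  obtain ⟨C, hC, hCW⟩ := halfPlane_growth (W := W) ((hd.const_mul _).const_mul _).cexp (by
    intro w hw
    obtain ⟨h1, h2, h3⟩ := hΦ w hw
    rw [hW, Complex.exp_im, him, Real.sin_neg, mul_neg, neg_lt_zero]
    refine mul_pos (Real.exp_pos _) (Real.sin_pos_of_pos_of_lt_pi (by positivity) ?_)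
    rwa [inv_mul_lt_iff₀ hm, mul_comm])
  refine ⟨C, hC, fun w hw => ⟨‖W w‖, norm_nonneg _, ?_, ?_⟩⟩
  · rw [abs_of_pos hw]
    refine (hCW w hw).trans ?_
    gcongr
    simpa using norm_add_le w Complex.I
  · rw [norm_mul, norm_qSqrt hw.le]
    gcongr
    refine (norm_sub_le _ _).trans ?_
    rw [norm_one, norm_mul, Complex.norm_real, Real.norm_eq_abs, abs_of_nonneg hL0]
    have h1 : ‖W w‖ ^ (m + 1) = Real.exp (Φ w).im := by
      rw [hW, Complex.norm_exp, hre, ← Real.exp_nat_mul]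
      congr 1
      push_cast
      field_simp
    rw [h1]
    have h2 := norm_cos_le_exp (hΦ w hw).1.le
    have h3 := mul_le_of_le_one_left (norm_nonneg (Complex.cos (Φ w))) hL1
    linarith

/-! ### Identification of the error -/

/-- Theorem 4 (error identification): if `φ` maps `Q` conformally onto `Ω_{B,m}` with
`φ(∞) = ∞`, `φ(0) = iB`, `φ(a) = 0` and `φ(1) = π(m+1)`, then `L_m(a) = 1/cosh B`. -/
theorem Lm_eq_inv_cosh (m : ℕ) (B a : ℝ) (hB : 0 < B) (ha0 : 0 < a) (ha1 : a < 1)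
    (φ : ℂ → ℂ)
    (hcont : ContinuousOn φ (closure Q))
    (hmaps : MapsTo φ (closure Q) (closure (ΩBm B m)))
    (hholo : DifferentiableOn ℂ φ Q)
    (hbij : BijOn φ Q (ΩBm B m))
    (hlim : Tendsto (fun z => ‖φ z‖) (comap (fun z : ℂ => ‖z‖) atTop ⊓ principal Q) atTop)
    (h0 : φ 0 = (B : ℂ) * Complex.I) (ha : φ a = 0)
    (h1 : φ 1 = (Real.pi * (m + 1) : ℝ)) :
    Lm m a = 1 / Real.cosh B := by
  set Φ : ℂ → ℂ := fun w => φ (qSqrt w) with hΦ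
  have hc : ContinuousOn Φ {w | 0 ≤ w.im} :=
    hcont.comp continuous_qSqrt.continuousOn fun w _ => qSqrt_mem_closure w
  have hd : DifferentiableOn ℂ Φ {w | 0 < w.im} :=
    hholo.comp differentiableOn_qSqrt bijOn_qSqrt.mapsTo
  have hb : BijOn Φ {w | 0 < w.im} (ΩBm B m) := hbij.comp bijOn_qSqrt
  have hcl : ∀ w : ℂ, 0 ≤ (Φ w).im ∧ gB B (Φ w).im ≤ (Φ w).re ∧
      (Φ w).re ≤ Real.pi * (m + 1) := fun w => closure_ΩBm (hmaps (qSqrt_mem_closure w))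
  have hbd : ∀ t : ℝ, Φ t ∈ bdΩ B m := by
    intro t
    refine ⟨hcl t, ?_⟩
    -- a point of the closure with all three inequalities strict lies in the region
    by_contra! hcon
    obtain ⟨c1, c2, c3⟩ := hcon
    obtain ⟨d1, d2, d3⟩ := hcl t
    exact boundary_notMem hc hd hb t
      ⟨lt_of_le_of_ne d1 c1.symm, lt_of_le_of_ne d2 c2.symm, lt_of_le_of_ne d3 c3⟩
  obtain ⟨hvc, hvm⟩ := bdCoord_monotone hB hc hd (fun w _ => hcl w) hbd
  set v : ℝ → ℝ := fun t => bdCoord (Φ t) with hv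
  have hsq : ∀ x : ℝ, 0 ≤ x → Φ ((x ^ 2 : ℝ) : ℂ) = φ x := by
    intro x hx
    rw [hΦ]
    simp only
    rw [qSqrt_of_nonneg (sq_nonneg x), Real.sqrt_sq hx]
  have hv0 : v 0 = -B := by
    have := hsq 0 le_rfl
    rw [zero_pow two_ne_zero, Complex.ofReal_zero, h0] at this
    rw [hv]
    simp only [Complex.ofReal_zero, this, bdCoord]
    rw [if_pos ⟨by simp [Real.pi_pos], by simpa using hB⟩]
    simp
  have hva : v (a ^ 2) = 0 := by
    rw [hv]
    simp only [hsq a ha0.le, ha, bdCoord]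
    simp
  have hv1 : v 1 = Real.pi * (m + 1) := by
    have := hsq 1 zero_le_one
    rw [one_pow, Complex.ofReal_one, h1] at this
    rw [hv]
    simp only [Complex.ofReal_one, this, bdCoord, Complex.ofReal_im, Complex.ofReal_re]
    simp
  -- `t ≤ 0` lands on the curve, `t ≥ 0` on the rest of the boundary
  have hneg : ∀ t : ℝ, t ≤ 0 → (Complex.cos (Φ t)).re = Real.cosh B := by
    intro t ht
    have hvt : v t ≤ -B := hv0 ▸ hvm ht
    rcases bdΩ_cases (hbd t) with ⟨c1, c2, c3⟩ | ⟨c1, c2, c3, c4⟩ | ⟨c1, c2, c3⟩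
    · have hBim : B ≤ (Φ t).im := by
        have : v t = -(Φ t).im := c3
        linarith
      rw [cos_re, c2, cos_gB hB hBim]
      field_simp
    · have : v t = (Φ t).re := c4
      linarith
    · have : v t = (Φ t).re + (Φ t).im := c3
      linarith [(gB_nonneg B (Φ t).im).trans (hcl t).2.1]
  have hpos : ∀ t : ℝ, 0 ≤ t → (Complex.cos (Φ t)).im = 0 := by
    intro t ht
    have hvt : -B ≤ v t := hv0 ▸ hvm ht
    rw [cos_im]
    rcases bdΩ_cases (hbd t) with ⟨c1, c2, c3⟩ | ⟨c1, c2, c3, c4⟩ | ⟨c1, c2, c3⟩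
    · have : v t = -(Φ t).im := c3
      rw [c2, gB_of_le (by linarith)]
      simp
    · rw [c1]
      simp
    · rw [c2, mul_comm Real.pi]
      have := Real.sin_nat_mul_pi (m + 1)
      push_cast at this
      rw [this]
      simp
  have hmid : ∀ t : ℝ, a ^ 2 ≤ t → t ≤ 1 → Φ t = v t := by
    intro t hat ht1
    have hvt0 : 0 ≤ v t := hva ▸ hvm hat
    have hvt1 : v t ≤ Real.pi * (m + 1) := hv1 ▸ hvm ht1
    rcases bdΩ_cases (hbd t) with ⟨c1, c2, c3⟩ | ⟨c1, c2, c3, c4⟩ | ⟨c1, c2, c3⟩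
    · have : v t = -(Φ t).im := c3
      linarith
    · have : v t = (Φ t).re := c4
      exact Complex.ext (by simp [this]) (by simp [c1])
    · have : v t = (Φ t).re + (Φ t).im := c3
      linarith
  set L : ℝ := 1 / Real.cosh B with hL
  have hch := Real.cosh_pos B
  have hL0 : 0 ≤ L := by positivity
  have hL1 : L ≤ 1 := by
    rw [hL, div_le_one hch]; exact Real.one_le_cosh B
  set F : ℂ → ℂ := fun w => qSqrt w * (1 - L * Complex.cos (Φ w)) with hF
  have hFc : ContinuousOn F {w | 0 ≤ w.im} := continuous_qSqrt.continuousOn.mul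
    (continuousOn_const.sub (continuousOn_const.mul (Complex.continuous_cos.comp_continuousOn hc)))
  have hFd : DifferentiableOn ℂ F {w | 0 < w.im} :=
    differentiableOn_qSqrt.mul ((hd.ccos.const_mul _).const_sub _)
  have hFr : ∀ x : ℝ, (F x).im = 0 := by
    intro x
    rw [hF]
    simp only
    rw [Complex.mul_im, Complex.sub_re, Complex.sub_im, Complex.re_ofReal_mul,
      Complex.im_ofReal_mul, Complex.one_re, Complex.one_im]
    rcases le_total x 0 with hx | hx
    · rw [qSqrt_re_of_nonpos hx, hneg x hx, hL]
      field_simp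
      ring
    · rw [qSqrt_of_nonneg hx, hpos x hx]
      simp
  have hV : Differentiable ℂ (schwarzRefl F) := differentiableOn_univ.1
    (schwarzRefl_differentiableOn isOpen_univ (fun _ _ => mem_univ _)
      (hFc.mono inter_subset_right)
      (fun z _ hz => hFd.differentiableAt
        ((isOpen_lt continuous_const Complex.continuous_im).mem_nhds hz))
      (fun x _ => hFr x))
  have hVx : ∀ x : ℝ, schwarzRefl F x = F x := fun x => by simp [schwarzRefl]
  obtain ⟨C, hC, hgr⟩ := growth_upper hL0 hL1 hd (m := m) (fun w hw => by
    obtain ⟨c1, c2, c3⟩ := hb.mapsTo hw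
    exact ⟨c1, (gB_nonneg _ _).trans_lt c2, c3⟩)
  obtain ⟨K, hK⟩ := growth_of_offReal hV m hC (by
    intro w hw
    rcases lt_or_gt_of_ne hw with h | h
    · obtain ⟨ω, w1, w2, w3⟩ := hgr ((starRingEnd ℂ) w) (by simpa using h)
      rw [RCLike.norm_conj] at w2 w3
      refine ⟨ω, w1, by simpa using w2, ?_⟩
      rw [schwarzRefl, if_neg (not_le.2 h), RCLike.norm_conj]
      exact w3
    · rw [schwarzRefl, if_pos h.le]
      exact hgr w h)
  obtain ⟨T, hT, hTV⟩ := entire_polynomial hV (by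
    have := hVx 0
    rw [Complex.ofReal_zero] at this
    have h00 : qSqrt 0 = 0 := by simpa using qSqrt_of_nonneg le_rfl
    rw [this, hF]
    simp [h00]) m (fun x => by rw [hVx, hFr]) hK
  have hTx : ∀ x ∈ Icc a 1, x * T.eval (x ^ 2) - 1 = -(L * Real.cos (v (x ^ 2))) := by
    intro x hx
    have hx0 : 0 < x := ha0.trans_le hx.1
    have e := hTV (x ^ 2)
    rw [hVx, hF] at e
    simp only at e
    rw [hmid (x ^ 2) (pow_le_pow_left₀ ha0.le hx.1 2) (pow_le_one₀ hx0.le hx.2),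
      qSqrt_of_nonneg (sq_nonneg x), Real.sqrt_sq hx0.le] at e
    have e' : x * (1 - L * Real.cos (v (x ^ 2))) = x ^ 2 * T.eval (x ^ 2) := by
      exact_mod_cast e
    have ee2 : 1 - L * Real.cos (v (x ^ 2)) = x * T.eval (x ^ 2) :=
      mul_left_cancel₀ hx0.ne' (by rw [e']; ring)
    linarith
  have ha2 : a ^ 2 ≤ 1 := pow_le_one₀ ha0.le ha1.le
  have hex : ∀ k : ℕ, ∃ t : ℝ, k ≤ m + 1 → t ∈ Icc (a ^ 2) 1 ∧ v t = k * Real.pi := by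
    intro k
    by_cases hk : k ≤ m + 1
    · have hk' : (k : ℝ) ≤ m + 1 := by exact_mod_cast hk
      obtain ⟨t, ht, htv⟩ := intermediate_value_Icc ha2 hvc.continuousOn
        (show (k * Real.pi : ℝ) ∈ Icc (v (a ^ 2)) (v 1) by
          rw [hva, hv1, mul_comm (k : ℝ)]
          exact ⟨by positivity, mul_le_mul_of_nonneg_left hk' Real.pi_pos.le⟩)
      exact ⟨t, fun _ => ⟨ht, htv⟩⟩
    · exact ⟨0, fun h => absurd h hk⟩
  choose t ht using hex
  have htx : ∀ k ≤ m + 1, √(t k) ∈ Icc a 1 := by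
    intro k hk
    obtain ⟨⟨c1, c2⟩, -⟩ := ht k hk
    exact ⟨Real.le_sqrt_of_sq_le c1, Real.sqrt_le_one.2 c2⟩
  have ht0 : ∀ k ≤ m + 1, 0 ≤ t k := fun k hk => (sq_nonneg a).trans (ht k hk).1.1
  refine Lm_eq_of_alternation m ha0 ha1 T hT ?_ (fun k => √(t k)) htx ?_ ?_
  · intro x hx
    rw [hTx x hx, abs_neg, abs_mul, abs_of_nonneg hL0]
    exact mul_le_of_le_one_right hL0 (Real.abs_cos_le_one _)
  · intro i j hij hj
    have hi : i ≤ m + 1 := by omega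
    refine Real.sqrt_lt_sqrt (ht0 i hi) (hvm.reflect_lt ?_)
    change v (t i) < v (t j)
    rw [(ht i hi).2, (ht j hj).2]
    have : (i : ℝ) < j := by exact_mod_cast hij
    exact mul_lt_mul_of_pos_right this Real.pi_pos
  · intro k hk
    rw [hTx _ (htx k hk), Real.sq_sqrt (ht0 k hk), (ht k hk).2, Real.cos_nat_mul_pi]
    ring
end
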